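/- Let S = k[x_0,…,x_n, y_0,…,y_m] be a bigraded polynomial ring and let V be a complete intersection scheme of points in P^n × P^m defined by I = (f_1,…,f_{n+m}) with deg(f_i) = (d,e) for all i. If μ ∈ Z² does not belong to Γ_1, then HF_{S/I}(μ) = HF_V(μ). -/

import Mathlib

open MvPolynomial Pointwise

noncomputable section

/-- The bigraded polynomial ring `S = k[x_0,…,x_n,y_0,…,y_m]`. -/
abbrev PolyS (k : Type) [Field k] (n m : ℕ) := MvPolynomial (Fin (n+1) ⊕ Fin (m+1)) k

/-- The bigrading weights: `deg x_i = (1,0)`, `deg y_j = (0,1)`. -/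
def wt (n m : ℕ) : (Fin (n+1) ⊕ Fin (m+1)) → ℤ × ℤ :=
  Sum.elim (fun _ => (1,0)) (fun _ => (0,1))

/-- The bigraded piece of `S` in bidegree `γ`. -/
def grad (k : Type) [Field k] (n m : ℕ) (γ : ℤ × ℤ) : Submodule k (PolyS k n m) :=
  weightedHomogeneousSubmodule k (wt n m) γ

/-- `B₁ = (x_0,…,x_n)`. -/
def Bone (k : Type) [Field k] (n m : ℕ) : Ideal (PolyS k n m) :=
  Ideal.span (Set.range fun i => X (Sum.inl i))

/-- `B₂ = (y_0,…,y_m)`. -/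
def Btwo (k : Type) [Field k] (n m : ℕ) : Ideal (PolyS k n m) :=
  Ideal.span (Set.range fun j => X (Sum.inr j))

/-- `B = B₁ ⬝ B₂`, the irrelevant ideal of `ℙⁿ × ℙᵐ`. -/
def Birr (k : Type) [Field k] (n m : ℕ) : Ideal (PolyS k n m) := Bone k n m * Btwo k n m

/-- The saturation `I : C^∞` of an ideal. -/
def satIdeal {k : Type} [Field k] {n m : ℕ} (I C : Ideal (PolyS k n m)) :
    Ideal (PolyS k n m) :=
  ⨆ t : ℕ, Submodule.colon I (C ^ t)

/-- The bidegree-`γ` piece of `S ⧸ I`, as a `k`-subspace. -/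
def quotPiece (k : Type) [Field k] (n m : ℕ) (I : Ideal (PolyS k n m)) (γ : ℤ × ℤ) :
    Submodule k ((PolyS k n m) ⧸ I) :=
  (grad k n m γ).map (Ideal.Quotient.mkₐ k I).toLinearMap

/-- The bigraded Hilbert function of `S ⧸ I`. -/
def HFq (k : Type) [Field k] (n m : ℕ) (I : Ideal (PolyS k n m)) (γ : ℤ × ℤ) : ℕ :=
  Module.finrank k (quotPiece k n m I γ)

/-- The bigraded Hilbert function of the subscheme of `ℙⁿ × ℙᵐ` defined by `I`, i.e. the
Hilbert function of `S ⧸ (I : B^∞)`. -/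
def HFV (k : Type) [Field k] (n m : ℕ) (I : Ideal (PolyS k n m)) (γ : ℤ × ℤ) : ℕ :=
  HFq k n m (satIdeal I (Birr k n m)) γ

/-- `codim V = r`, encoded as: the cone over `V` (i.e. `Spec` of `S` modulo the saturation
of `I`) has Krull dimension `n + m + 2 - r`. -/
def CodimEq (k : Type) [Field k] (n m : ℕ) (I : Ideal (PolyS k n m)) (r : ℕ) : Prop :=
  ringKrullDim ((PolyS k n m) ⧸ satIdeal I (Birr k n m)) = ((n + m + 2 - r : ℕ) : WithBot ℕ∞)

/-- The Hilbert function of `S` itself. -/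
def HFS (k : Type) [Field k] (n m : ℕ) (γ : ℤ × ℤ) : ℕ :=
  Module.finrank k (grad k n m γ)

/-- Integer binomial coefficient `C(x,t)`, with the Hilbert-function convention that it
vanishes for `x < 0`. -/
def ibin (x : ℤ) (t : ℕ) : ℤ := if x < 0 then 0 else (x.toNat.choose t : ℤ)

/-- `χ(a,b) = Σᵢ (−1)^i C(n+m,i) C(n+a−id,n) C(m+b−ie,m)`. -/
def chiCI (n m d e : ℕ) (γ : ℤ × ℤ) : ℤ :=
  ∑ i ∈ Finset.range (n + m + 1),
    (-1) ^ i * (Nat.choose (n + m) i : ℤ) *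
      ibin ((n : ℤ) + γ.1 - i * d) n * ibin ((m : ℤ) + γ.2 - i * e) m

/-- `v_i = i·(d,e) − (n+1,0)`. -/
def vpt (n d e : ℕ) (i : ℤ) : ℤ × ℤ := (i * d - (n + 1), i * e)

/-- `w_i = i·(d,e) − (0,m+1)`. -/
def wpt (m d e : ℕ) (i : ℤ) : ℤ × ℤ := (i * d, i * e - (m + 1))

/-- `σ = (n+m)·(d,e) − (n+1,m+1)`. -/
def sigmaPt (n m d e : ℕ) : ℤ × ℤ :=
  ((n + m : ℤ) * d - (n + 1), (n + m : ℤ) * e - (m + 1))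

/-- `Γ_i = Supp(H^{n+1}_{B₁}(K_{n+i}(f,S))) ∪ Supp(H^{m+1}_{B₂}(K_{m+i}(f,S)))`, computed
explicitly: for `0 ≤ n+i ≤ n+m` the first support is `v_{n+i} + (−ℕ,ℕ)`, and for
`0 ≤ m+i ≤ n+m` the second support is `w_{m+i} + (ℕ,−ℕ)`; otherwise the Koszul terms
vanish. -/
def GammaSet (n m d e : ℕ) (i : ℤ) : Set (ℤ × ℤ) :=
  {γ | (0 ≤ (n : ℤ) + i ∧ (n : ℤ) + i ≤ (n : ℤ) + m ∧
          γ.1 ≤ ((n : ℤ) + i) * d - ((n : ℤ) + 1) ∧ ((n : ℤ) + i) * e ≤ γ.2) ∨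
       (0 ≤ (m : ℤ) + i ∧ (m : ℤ) + i ≤ (n : ℤ) + m ∧
          ((m : ℤ) + i) * d ≤ γ.1 ∧ γ.2 ≤ ((m : ℤ) + i) * e - ((m : ℤ) + 1))}

/-- `V = Proj(S/I)` is a complete intersection scheme of points in `ℙⁿ × ℙᵐ` defined by
`n+m` forms of bidegree `(d,e)`: `I` is generated by the `f i`, each `f i` is bihomogeneous
of bidegree `(d,e)`, and `V` is zero-dimensional (codimension `n+m`). -/
def IsCIPoints (k : Type) [Field k] (n m d e : ℕ) (f : Fin (n + m) → PolyS k n m)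
    (I : Ideal (PolyS k n m)) : Prop :=
  (∀ i, f i ∈ grad k n m ((d : ℤ), (e : ℤ))) ∧ I = Ideal.span (Set.range f) ∧
    CodimEq k n m I (n + m)

/-!
A form `g` of degree `μ` in the saturation `J` of `I` lies in `I` because of the double complex
built from the Koszul complex of `f` and the Čech complex of the variables. In the Čech direction
it is exact except in degrees where the local cohomology of `S` with respect to `B₁` or `B₂` lives,
that is, at Laurent monomials whose negative exponents are exactly those of the `x_i` or exactly
those of the `y_j`; a degree outside `Γ₁` meets none of these at the places that a diagram chase
visits. In the Koszul direction it is exact after inverting a product `x_i y_j`: since `S/J` has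
Krull dimension at most `2`, any three variables are algebraically dependent modulo `J`, so for
each of the remaining `n + m` variables the localized `I` contains a form in that variable and one
of `x_i`, `y_j` that is monic in the former; these forms are a regular sequence, so by depth
sensitivity the Koszul complex of `f` is acyclic there. Since `g` becomes a combination of the
`f i` after inverting every `x_i y_j`, the chase leads to one such combination over `S`.
-/

theorem sum_mul_sum_eq_zero_of_anticomm {ι A : Type*} [NonUnitalNonAssocRing A] (s : Finset ι)
    (a : ι → A) (hsq : ∀ i, a i * a i = 0) (hanti : ∀ i j, a i * a j = -(a j * a i)) :
    (∑ i ∈ s, a i) * ∑ i ∈ s, a i = 0 := by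
  classical
  induction s using Finset.induction_on with
  | empty => simp
  | insert i s hi ih =>
    have hcross : (∑ j ∈ s, a j) * a i = -(a i * ∑ j ∈ s, a j) := by
      simp only [Finset.sum_mul, Finset.mul_sum, hanti _ i, Finset.sum_neg_distrib]
    rw [Finset.sum_insert hi, add_mul, mul_add, mul_add, ih, hsq, hcross]
    abel

section Exterior

variable {ι : Type*} [LinearOrder ι]

/-- The sign `(-1)^#{j ∈ T | j < i}` of moving `e_i` to its place in the exterior monomial
`e_T`. -/
def exteriorSign (i : ι) (T : Finset ι) : ℤ := (-1) ^ (T.filter (· < i)).card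

theorem exteriorSign_mul_self (i : ι) (T : Finset ι) :
    exteriorSign i T * exteriorSign i T = 1 := by
  rw [exteriorSign, ← mul_pow, neg_one_mul, neg_neg, one_pow]

theorem exteriorSign_insert (i : ι) {j : ι} {T : Finset ι} (hj : j ∉ T) :
    exteriorSign i (insert j T) = (if j < i then -1 else 1) * exteriorSign i T := by
  unfold exteriorSign
  rw [Finset.filter_insert]
  split_ifs with h
  · rw [Finset.card_insert_of_notMem (by simp [hj]), pow_succ']
  · rw [one_mul]

theorem exteriorSign_mul_insert {i j : ι} {T : Finset ι} (hi : i ∉ T) (hj : j ∉ T) (hij : i ≠ j) :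
    exteriorSign i T * exteriorSign j (insert i T) =
      -(exteriorSign j T * exteriorSign i (insert j T)) := by
  rw [exteriorSign_insert j hi, exteriorSign_insert i hj]
  rcases hij.lt_or_gt with h | h <;> rw [if_pos h, if_neg h.not_gt] <;> ring

variable (R : Type*) [CommRing R] {M : Type*} [AddCommGroup M] [Module R M]

/-- Exterior multiplication by `e_i` on `M`-valued cochains; the function `z : Finset ι → M`
encodes the element `∑_T z T e_T` of `M ⊗ ⋀ R^ι`. -/
def wedge (i : ι) : Module.End R (Finset ι → M) where
  toFun z T := if i ∈ T then exteriorSign i (T.erase i) • z (T.erase i) else 0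
  map_add' x y := by ext T; simp only [Pi.add_apply]; split_ifs <;> simp
  map_smul' a x := by
    ext T; simp only [Pi.smul_apply, RingHom.id_apply]; split_ifs <;> simp [smul_comm a]

/-- Contraction by the dual basis vector `e_i^*`, adjoint to `wedge R i`. -/
def contract (i : ι) : Module.End R (Finset ι → M) where
  toFun z T := if i ∈ T then 0 else exteriorSign i T • z (insert i T)
  map_add' x y := by ext T; simp only [Pi.add_apply]; split_ifs <;> simp
  map_smul' a x := by
    ext T; simp only [Pi.smul_apply, RingHom.id_apply]; split_ifs <;> simp [smul_comm a]

variable {R} {i j : ι} {T : Finset ι}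

theorem wedge_apply_insert (h : i ∉ T) (z : Finset ι → M) :
    wedge R i z (insert i T) = exteriorSign i T • z T := by
  simp [wedge, h]

theorem wedge_apply_of_notMem (h : i ∉ T) (z : Finset ι → M) : wedge R i z T = 0 := if_neg h

theorem contract_apply_of_notMem (h : i ∉ T) (z : Finset ι → M) :
    contract R i z T = exteriorSign i T • z (insert i T) := if_neg h

theorem contract_apply_of_mem (h : i ∈ T) (z : Finset ι → M) : contract R i z T = 0 := if_pos h

theorem wedge_apply_mem (F : Finset ι → AddSubgroup M) {z : Finset ι → M}
    (h : ∀ T, i ∉ T → z T ∈ F (insert i T)) (T : Finset ι) : wedge R i z T ∈ F T := by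
  by_cases hi : i ∈ T
  · obtain ⟨U, hiU, rfl⟩ : ∃ U, i ∉ U ∧ insert i U = T :=
      ⟨T.erase i, T.notMem_erase i, T.insert_erase hi⟩
    rw [wedge_apply_insert hiU]
    exact zsmul_mem (h U hiU) _
  · rw [wedge_apply_of_notMem hi]
    exact zero_mem _

theorem contract_apply_mem (F : Finset ι → AddSubgroup M) {z : Finset ι → M}
    (h : ∀ T, i ∉ T → z (insert i T) ∈ F T) (T : Finset ι) : contract R i z T ∈ F T := by
  by_cases hi : i ∈ T
  · rw [contract_apply_of_mem hi]
    exact zero_mem _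
  · rw [contract_apply_of_notMem hi]
    exact zsmul_mem (h T hi) _

theorem wedge_comp {M' : Type*} [AddCommGroup M'] [Module R M'] (g : M →+ M') (z : Finset ι → M) :
    wedge R i (g ∘ z) = g ∘ wedge R i z := by
  ext T
  simp only [wedge, LinearMap.coe_mk, AddHom.coe_mk, Function.comp_apply]
  split_ifs <;> simp

theorem contract_comp {M' : Type*} [AddCommGroup M'] [Module R M'] (g : M →+ M')
    (z : Finset ι → M) : contract R i (g ∘ z) = g ∘ contract R i z := by
  ext T
  simp only [contract, LinearMap.coe_mk, AddHom.coe_mk, Function.comp_apply]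
  split_ifs <;> simp

theorem wedge_wedge_apply_of_notMem (h : i ∉ T) (z : Finset ι → M) :
    wedge R j (wedge R i z) T = 0 := by
  simp [wedge, h]

theorem contract_contract_apply_of_mem (h : i ∈ T) (z : Finset ι → M) :
    contract R j (contract R i z) T = 0 := by
  simp [contract, h]

variable (R M)

theorem wedge_mul_self (i : ι) : wedge R i * wedge R i = (0 : Module.End R (Finset ι → M)) := by
  ext z T
  change wedge R i (wedge R i z) T = 0
  simp [wedge]

theorem contract_mul_self (i : ι) :
    contract R i * contract R i = (0 : Module.End R (Finset ι → M)) := by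
  ext z T
  change contract R i (contract R i z) T = 0
  simp [contract]

theorem wedge_mul_wedge (i j : ι) :
    wedge R i * wedge R j = -(wedge R j * wedge R i : Module.End R (Finset ι → M)) := by
  rcases eq_or_ne i j with rfl | hij
  · rw [wedge_mul_self, neg_zero]
  ext z T
  change wedge R i (wedge R j z) T = -wedge R j (wedge R i z) T
  by_cases hi : i ∈ T
  swap
  · rw [wedge_apply_of_notMem hi, wedge_wedge_apply_of_notMem hi, neg_zero]
  by_cases hj : j ∈ T
  swap
  · rw [wedge_apply_of_notMem hj, wedge_wedge_apply_of_notMem hj, neg_zero]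
  obtain ⟨U, hiU, hjU, rfl⟩ : ∃ U, i ∉ U ∧ j ∉ U ∧ insert i (insert j U) = T :=
    ⟨(T.erase i).erase j, by simp, by simp, by grind⟩
  rw [wedge_apply_insert (by simp [hiU, hij]), wedge_apply_insert hjU, Finset.insert_comm,
    wedge_apply_insert (by simp [hjU, hij.symm]), wedge_apply_insert hiU, smul_smul, smul_smul,
    ← neg_smul, mul_comm, mul_comm _ (exteriorSign i U), exteriorSign_mul_insert hiU hjU hij,
    neg_neg]

theorem contract_mul_contract (i j : ι) :
    contract R i * contract R j = -(contract R j * contract R i : Module.End R (Finset ι → M)) := by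
  rcases eq_or_ne i j with rfl | hij
  · rw [contract_mul_self, neg_zero]
  ext z T
  change contract R i (contract R j z) T = -contract R j (contract R i z) T
  by_cases hi : i ∈ T
  · rw [contract_apply_of_mem hi, contract_contract_apply_of_mem hi, neg_zero]
  by_cases hj : j ∈ T
  · rw [contract_apply_of_mem hj, contract_contract_apply_of_mem hj, neg_zero]
  rw [contract_apply_of_notMem hi, contract_apply_of_notMem hj,
    contract_apply_of_notMem (by simp [hj, hij.symm]),
    contract_apply_of_notMem (by simp [hi, hij]), Finset.insert_comm, smul_smul, smul_smul,
    ← neg_smul, exteriorSign_mul_insert hi hj hij]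

theorem contract_mul_wedge_add_self (i : ι) :
    contract R i * wedge R i + wedge R i * contract R i = (1 : Module.End R (Finset ι → M)) := by
  ext z T
  change contract R i (wedge R i z) T + wedge R i (contract R i z) T = z T
  by_cases hi : i ∈ T
  · obtain ⟨U, hiU, rfl⟩ : ∃ U, i ∉ U ∧ insert i U = T :=
      ⟨T.erase i, T.notMem_erase i, T.insert_erase hi⟩
    rw [contract_apply_of_mem hi, wedge_apply_insert hiU, contract_apply_of_notMem hiU,
      smul_smul, exteriorSign_mul_self, one_smul, zero_add]
  · rw [contract_apply_of_notMem hi, wedge_apply_insert hi, wedge_apply_of_notMem hi, smul_smul,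
      exteriorSign_mul_self, one_smul, add_zero]

theorem contract_mul_wedge_add_of_ne (hij : i ≠ j) :
    contract R i * wedge R j + wedge R j * contract R i = (0 : Module.End R (Finset ι → M)) := by
  ext z T
  change contract R i (wedge R j z) T + wedge R j (contract R i z) T = 0
  by_cases hi : i ∈ T
  · simp [contract, wedge, hi, hij]
  by_cases hj : j ∈ T
  swap
  · simp [contract, wedge, hi, hj, hij.symm]
  obtain ⟨U, hjU, rfl⟩ : ∃ U, j ∉ U ∧ insert j U = T :=
    ⟨T.erase j, T.notMem_erase j, T.insert_erase hj⟩
  have hiU : i ∉ U := fun h => hi (Finset.mem_insert_of_mem h)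
  have hsign : exteriorSign i (insert j U) * exteriorSign j (insert i U) =
      -(exteriorSign j U * exteriorSign i U) := by
    rw [exteriorSign_insert i hjU, exteriorSign_insert j hiU]
    rcases hij.lt_or_gt with h | h <;> rw [if_pos h, if_neg h.not_gt] <;> ring
  rw [contract_apply_of_notMem hi, wedge_apply_insert hjU, contract_apply_of_notMem hiU,
    Finset.insert_comm, wedge_apply_insert (by simp [hjU, hij.symm]), smul_smul, smul_smul, hsign,
    neg_smul, neg_add_cancel]

variable {R M} (A : Finset ι)

variable (R) in
/-- The Čech-type differential `∑ i ∈ A, wedge R i`. -/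
def wedgeSum : Module.End R (Finset ι → M) := ∑ i ∈ A, wedge R i

theorem wedgeSum_apply_mem (F : Finset ι → AddSubgroup M) {z : Finset ι → M}
    (h : ∀ i ∈ A, ∀ T, i ∉ T → z T ∈ F (insert i T)) (T : Finset ι) : wedgeSum R A z T ∈ F T := by
  rw [wedgeSum, LinearMap.sum_apply, Finset.sum_apply]
  exact sum_mem fun i hi => wedge_apply_mem F (h i hi) T

theorem wedgeSum_comp {M' : Type*} [AddCommGroup M'] [Module R M'] (g : M →+ M')
    (z : Finset ι → M) : wedgeSum R A (g ∘ z) = g ∘ wedgeSum R A z := by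
  ext T
  simp [wedgeSum, wedge_comp]

theorem wedgeSum_wedgeSum_self (z : Finset ι → M) : wedgeSum R A (wedgeSum R A z) = 0 :=
  LinearMap.congr_fun (sum_mul_sum_eq_zero_of_anticomm A (fun i => wedge R i)
    (wedge_mul_self R M) (wedge_mul_wedge R M)) z

theorem wedgeSum_wedgeSum_comm (B : Finset ι) (z : Finset ι → M) :
    wedgeSum R A (wedgeSum R B z) = -wedgeSum R B (wedgeSum R A z) := by
  have h : wedgeSum R A * wedgeSum R B = -(wedgeSum R B * wedgeSum R A :
      Module.End R (Finset ι → M)) := by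
    rw [wedgeSum, wedgeSum, Finset.sum_mul_sum, Finset.sum_mul_sum, Finset.sum_comm]
    simp only [← Finset.sum_neg_distrib]
    exact Finset.sum_congr rfl fun j _ => Finset.sum_congr rfl fun i _ => wedge_mul_wedge R M i j
  exact LinearMap.congr_fun h z

variable {A} in
theorem contract_wedgeSum_add (hi : i ∈ A) (z : Finset ι → M) :
    contract R i (wedgeSum R A z) + wedgeSum R A (contract R i z) = z := by
  have h : contract R i * wedgeSum R A + wedgeSum R A * contract R i =
      (1 : Module.End R (Finset ι → M)) := by
    rw [wedgeSum, Finset.mul_sum, Finset.sum_mul, ← Finset.sum_add_distrib,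
      Finset.sum_eq_single_of_mem i hi fun j _ hj => contract_mul_wedge_add_of_ne R M hj.symm,
      contract_mul_wedge_add_self]
  exact LinearMap.congr_fun h z

variable {A} in
theorem contract_wedgeSum_of_notMem (hi : i ∉ A) (z : Finset ι → M) :
    contract R i (wedgeSum R A z) = -wedgeSum R A (contract R i z) := by
  have h : contract R i * wedgeSum R A + wedgeSum R A * contract R i =
      (0 : Module.End R (Finset ι → M)) := by
    rw [wedgeSum, Finset.mul_sum, Finset.sum_mul, ← Finset.sum_add_distrib]
    exact Finset.sum_eq_zero fun j hj =>
      contract_mul_wedge_add_of_ne R M fun hij => hi (hij ▸ hj)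
  exact eq_neg_of_add_eq_zero_left (LinearMap.congr_fun h z)

variable {A} in
theorem eq_zero_of_wedgeSum_eq_zero (hi : i ∈ A) {z : Finset ι → M} (hz : wedgeSum R A z = 0)
    (hc : contract R i z = 0) : z = 0 := by
  rw [← contract_wedgeSum_add (R := R) hi z, hz, hc, map_zero, map_zero, add_zero]

variable {A} in
theorem eq_zero_of_wedgeSum_wedgeSum_eq_zero {B : Finset ι} (hiA : i ∈ A) (hiB : i ∉ B)
    (hj : j ∈ B) {z : Finset ι → M} (hz : wedgeSum R A (wedgeSum R B z) = 0)
    (hci : contract R i z = 0) (hcj : contract R j z = 0) : z = 0 := by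
  refine eq_zero_of_wedgeSum_eq_zero hj (eq_zero_of_wedgeSum_eq_zero hiA hz ?_) hcj
  rw [contract_wedgeSum_of_notMem hiB, hci, map_zero, neg_zero]

variable {A} in
theorem wedgeSum_contract_eq_self (hi : i ∈ A) {z : Finset ι → M} (hz : wedgeSum R A z = 0) :
    wedgeSum R A (contract R i z) = z := by
  rw [← zero_add (wedgeSum R A _), ← map_zero (contract R i), ← hz, contract_wedgeSum_add hi]

end Exterior

section Koszul

variable {ι R M : Type*} [LinearOrder ι] [Fintype ι] [CommRing R] [AddCommGroup M] [Module R M]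

/-- The differential `∑ i, f i • contract R i` of the Koszul complex of `f` with values in `M`. -/
def koszulD (f : ι → R) : Module.End R (Finset ι → M) := ∑ i, f i • contract R i

/-- Exterior multiplication by the vector `∑ i, a i e_i`, a homotopy from multiplication by
`∑ i, a i * f i` on the Koszul complex of `f` to zero. -/
def koszulHomotopy (a : ι → R) : Module.End R (Finset ι → M) := ∑ i, a i • wedge R i

theorem koszulD_apply (f : ι → R) (z : Finset ι → M) (T : Finset ι) :
    koszulD f z T = ∑ i, f i • contract R i z T := by
  simp [koszulD]

theorem koszulD_apply_mem (f : ι → R) (F : Finset ι → AddSubgroup M) {z : Finset ι → M}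
    (h : ∀ i, ∀ T, i ∉ T → f i • z (insert i T) ∈ F T) (T : Finset ι) : koszulD f z T ∈ F T := by
  rw [koszulD_apply]
  refine sum_mem fun i _ => ?_
  rw [← Pi.smul_apply, ← map_smul]
  exact contract_apply_mem F (h i) T

theorem koszulD_comp {M' : Type*} [AddCommGroup M'] [Module R M'] (f : ι → R) (g : M →ₗ[R] M')
    (z : Finset ι → M) : koszulD f (g ∘ z) = g ∘ koszulD f z := by
  have hg (i : ι) : contract R i (g ∘ z) = g ∘ contract R i z := contract_comp g.toAddMonoidHom z
  ext T
  simp only [koszulD_apply, hg, Function.comp_apply, map_sum, map_smul]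

theorem koszulD_koszulD (f : ι → R) (z : Finset ι → M) : koszulD f (koszulD f z) = 0 :=
  LinearMap.congr_fun (sum_mul_sum_eq_zero_of_anticomm Finset.univ (fun i => f i • contract R i)
    (fun i => by rw [smul_mul_smul_comm, contract_mul_self, smul_zero])
    (fun i j => by
      rw [smul_mul_smul_comm, smul_mul_smul_comm, contract_mul_contract, smul_neg,
        mul_comm (f i)])) z

theorem koszulD_koszulHomotopy_add (f a : ι → R) (z : Finset ι → M) :
    koszulD f (koszulHomotopy a z) + koszulHomotopy a (koszulD f z) = (∑ i, a i * f i) • z := by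
  have h : koszulD f * koszulHomotopy a + koszulHomotopy a * koszulD f =
      (∑ i, a i * f i) • (1 : Module.End R (Finset ι → M)) := by
    simp only [koszulD, koszulHomotopy, Finset.sum_mul_sum]
    rw [Finset.sum_comm, ← Finset.sum_add_distrib, Finset.sum_smul]
    refine Finset.sum_congr rfl fun i _ => ?_
    simp only [smul_mul_smul_comm, mul_comm (f _)]
    simp only [← Finset.sum_add_distrib, ← smul_add]
    rw [Finset.sum_eq_single_of_mem i (Finset.mem_univ i) fun j _ hj => by
      rw [contract_mul_wedge_add_of_ne R M hj, smul_zero], contract_mul_wedge_add_self]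
  exact LinearMap.congr_fun h z

theorem koszulHomotopy_apply_eq_zero (a : ι → R) {z : Finset ι → M} {T : Finset ι}
    (h : ∀ i ∈ T, z (T.erase i) = 0) : koszulHomotopy a z T = 0 := by
  rw [koszulHomotopy, LinearMap.sum_apply, Finset.sum_apply]
  refine Finset.sum_eq_zero fun i _ => ?_
  by_cases hi : i ∈ T <;> simp [wedge, hi, h]

theorem koszulD_apply_empty_mem_span (f : ι → R) (z : Finset ι → R) :
    koszulD f z ∅ ∈ Ideal.span (Set.range f) :=
  koszulD_apply_mem f (fun _ => (Ideal.span (Set.range f)).toAddSubgroup)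
    (fun i _ _ => Ideal.mul_mem_right _ _ (Ideal.subset_span ⟨i, rfl⟩)) ∅

theorem exists_koszulD_eq_single_empty {f : ι → R} {x : R} (hx : x ∈ Ideal.span (Set.range f)) :
    ∃ z, koszulD f z = Pi.single ∅ x := by
  obtain ⟨a, rfl⟩ := Ideal.mem_span_range_iff_exists_fun.1 hx
  have h : koszulD f (Pi.single ∅ (1 : R)) = 0 := by
    ext1 T
    refine koszulD_apply_mem f (fun _ => ⊥) (fun i T _ => ?_) T
    rw [Pi.single_eq_of_ne (Finset.insert_ne_empty i T), smul_zero]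
    rfl
  refine ⟨koszulHomotopy a (Pi.single ∅ 1), ?_⟩
  rw [← add_zero (koszulD f _), ← map_zero (koszulHomotopy a), ← h, koszulD_koszulHomotopy_add,
    ← Pi.single_smul, smul_eq_mul, mul_one]

end Koszul

section Depth

open RingTheory.Sequence

variable {ι R : Type*} [LinearOrder ι] [Fintype ι] [CommRing R]

theorem koszulD_eq_smul_of_quotSMulTop {M : Type*} [AddCommGroup M] [Module R M] {f : ι → R}
    {p c : R} (hp : IsSMulRegular M p) {z w : Finset ι → M} (hw : koszulD f w = (c * p) • z)
    {b : R} {u : Finset ι → QuotSMulTop p M}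
    (hu : koszulD f u = b • (Submodule.mkQ (p • ⊤ : Submodule R M) ∘ w)) :
    ∃ v : Finset ι → M, koszulD f v = (b * c) • z := by
  set π := Submodule.mkQ (p • ⊤ : Submodule R M)
  obtain ⟨u, rfl⟩ := (Submodule.mkQ_surjective (p • ⊤ : Submodule R M)).comp_left u
  have hlift : ∀ T, ∃ y : M, p • y = b • w T - koszulD f u T := fun T => by
    have hT : b • w T - koszulD f u T ∈ p • (⊤ : Submodule R M) := by
      rw [← Submodule.Quotient.mk_eq_zero, ← Submodule.mkQ_apply, map_sub, map_smul, sub_eq_zero]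
      exact congr_fun (hu.symm.trans (koszulD_comp f π u)) T
    obtain ⟨y, -, hy⟩ := (Submodule.mem_smul_pointwise_iff_exists _ _ _).1 hT
    exact ⟨y, hy⟩
  choose v hv using hlift
  have hv : p • v = b • w - koszulD f u := funext hv
  refine ⟨v, funext fun T => hp ?_⟩
  have hpv : p • koszulD f v = p • (b * c) • z := by
    rw [← map_smul, hv, map_sub, koszulD_koszulD, sub_zero, map_smul, hw, smul_smul, smul_smul]
    congr 1
    ring
  exact congr_fun hpv T

theorem exists_koszulD_eq_pow_smul (f : ι → R) (b : R) (rs : List R)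
    (hb : ∀ x ∈ rs, ∃ t : ℕ, b ^ t * x ∈ Ideal.span (Set.range f)) (M : Type*) [AddCommGroup M]
    [Module R M] (hreg : IsWeaklyRegular M rs) (z : Finset ι → M)
    (hz : ∀ T, z T ≠ 0 → Fintype.card ι < T.card + rs.length) (hdz : koszulD f z = 0) :
    ∃ (s : ℕ) (w : Finset ι → M), koszulD f w = b ^ s • z := by
  induction rs generalizing M with
  | nil =>
    refine ⟨0, 0, ?_⟩
    have hz0 : z = 0 := funext fun T => by_contra fun h => (hz T h).not_ge T.card_le_univ
    rw [hz0, map_zero, smul_zero]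
  | cons p rs ih =>
    -- As `p` kills the homology up to powers of `b`, a multiple of `p • z` is the boundary of some
    -- `w`. Modulo `p` this `w` is a cycle one degree higher than `z`, and the induction applies.
    obtain ⟨t, ht⟩ := hb p List.mem_cons_self
    obtain ⟨a, ha⟩ := Ideal.mem_span_range_iff_exists_fun.1 ht
    obtain ⟨hp, hreg⟩ := (isWeaklyRegular_cons_iff M p rs).1 hreg
    set w := koszulHomotopy a z
    have hdw : koszulD f w = (b ^ t * p) • z := by
      rw [← ha, ← koszulD_koszulHomotopy_add, hdz, map_zero, add_zero]
    have hw : ∀ T, w T ≠ 0 → Fintype.card ι < T.card + rs.length := fun T hT => by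
      obtain ⟨i, hi, hzi⟩ : ∃ i ∈ T, z (T.erase i) ≠ 0 := by
        by_contra! h
        exact hT (koszulHomotopy_apply_eq_zero a h)
      have := hz _ hzi
      rw [List.length_cons] at this
      rw [← Finset.card_erase_add_one hi]
      omega
    set π := Submodule.mkQ (p • ⊤ : Submodule R M)
    obtain ⟨s, u, hu⟩ := ih (fun x hx => hb x (List.mem_cons_of_mem p hx)) (QuotSMulTop p M) hreg
      (π ∘ w) (fun T hT => hw T fun h => hT (by rw [Function.comp_apply, h, map_zero])) (by
        rw [koszulD_comp, hdw]
        ext T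
        refine (Submodule.Quotient.mk_eq_zero _).2 ?_
        rw [mul_comm, mul_smul, Pi.smul_apply]
        exact Submodule.smul_mem_pointwise_smul _ _ _ trivial)
    obtain ⟨v, hv⟩ := koszulD_eq_smul_of_quotSMulTop hp hdw hu
    exact ⟨s + t, v, by rw [hv, pow_add]⟩

/-- The Koszul complex of `f` has no homology in positive degrees after inverting `b`. -/
def KoszulAcyclicAway (f : ι → R) (b : R) : Prop :=
  ∀ z : Finset ι → R, koszulD f z = 0 → z ∅ = 0 →
    ∃ (s : ℕ) (w : Finset ι → R), koszulD f w = b ^ s • z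

theorem koszulAcyclicAway_of_isWeaklyRegular {f : ι → R} {b : R} {rs : List R}
    (hreg : IsWeaklyRegular R rs) (hb : ∀ x ∈ rs, ∃ t : ℕ, b ^ t * x ∈ Ideal.span (Set.range f))
    (hrs : Fintype.card ι ≤ rs.length) : KoszulAcyclicAway f b := by
  refine fun z hdz hz0 => exists_koszulD_eq_pow_smul f b rs hb R hreg z (fun T hT => ?_) hdz
  have : T.Nonempty := Finset.nonempty_iff_ne_empty.2 fun h => hT (h ▸ hz0)
  have := this.card_pos
  omega

end Depth

section Dimension

theorem ringKrullDim_le_of_isIntegral_of_injective {R D : Type*} [CommRing R] [CommRing D]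
    [Algebra R D] [Algebra.IsIntegral R D] (hinj : Function.Injective (algebraMap R D)) :
    ringKrullDim R ≤ ringKrullDim D := by
  refine iSup_le fun l => ?_
  obtain ⟨Q, -, hQ, hQl⟩ := Ideal.exists_ideal_over_prime_of_isIntegral l.head.asIdeal (⊥ : Ideal D)
    ((Ideal.comap_bot_of_injective _ hinj).trans_le bot_le)
  have : Q.LiesOver l.head.asIdeal := ⟨hQl.symm⟩
  obtain ⟨L, hL, -⟩ := Ideal.exists_ltSeries_of_hasGoingUp l Q
  rw [← hL]
  exact le_iSup (fun p : LTSeries (PrimeSpectrum D) => (p.length : WithBot ℕ∞)) L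

variable {k A ι : Type*} [Field k] [CommRing A] [Algebra k A] [Algebra.FiniteType k A] [Fintype ι]

theorem card_le_ringKrullDim_of_algebraicIndependent_of_isDomain [IsDomain A] {a : ι → A}
    (ha : AlgebraicIndependent k a) : (Fintype.card ι : WithBot ℕ∞) ≤ ringKrullDim A := by
  obtain ⟨s, g, hg, hint⟩ := exists_integral_inj_algHom_of_fg k A
  algebraize [g.toRingHom]
  have hinj : Function.Injective (algebraMap (MvPolynomial (Fin s) k) A) := hg
  have : IsScalarTower k (MvPolynomial (Fin s) k) A :=
    IsScalarTower.of_algebraMap_eq' g.comp_algebraMap.symm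
  have : Algebra.IsIntegral (MvPolynomial (Fin s) k) A := ⟨hint⟩
  have : FaithfulSMul (MvPolynomial (Fin s) k) A :=
    (faithfulSMul_iff_algebraMap_injective _ _).2 hinj
  have hs : Algebra.trdeg k A = s := by
    have h := lift_trdeg_add_eq k (MvPolynomial (Fin s) k) (A := A)
    simpa [MvPolynomial.trdeg_of_isDomain, trdeg_eq_zero] using h.symm
  have hcard : Fintype.card ι ≤ s := by
    simpa [hs] using ha.lift_cardinalMk_le_trdeg
  calc (Fintype.card ι : WithBot ℕ∞) ≤ s := by exact_mod_cast hcard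
    _ = ringKrullDim (MvPolynomial (Fin s) k) := by
      rw [MvPolynomial.ringKrullDim_of_isNoetherianRing, ringKrullDim_eq_zero_of_field]
      simp
    _ ≤ ringKrullDim A := ringKrullDim_le_of_isIntegral_of_injective hinj

theorem card_le_ringKrullDim_of_algebraicIndependent {a : ι → A} (ha : AlgebraicIndependent k a) :
    (Fintype.card ι : WithBot ℕ∞) ≤ ringKrullDim A := by
  have hinj : Function.Injective (aeval a : MvPolynomial ι k →ₐ[k] A).toRingHom := ha
  obtain ⟨Q, hQ, hcomap⟩ := Ideal.exists_comap_eq_of_mem_minimalPrimes_of_injective hinj ⊥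
    (by rw [IsDomain.minimalPrimes_eq_singleton_bot]; rfl)
  have haQ : AlgebraicIndependent k (Ideal.Quotient.mkₐ k Q ∘ a) := by
    rw [algebraicIndependent_iff]
    intro p hp
    rw [Function.comp_def, ← comp_aeval_apply, Ideal.Quotient.mkₐ_eq_mk,
      Ideal.Quotient.eq_zero_iff_mem] at hp
    exact hcomap.le hp
  exact (card_le_ringKrullDim_of_algebraicIndependent_of_isDomain haQ).trans
    (ringKrullDim_quotient_le Q)

end Dimension

section MonicIn

open RingTheory.Sequence

theorem mem_map_C_of_monic_mul_mem {R : Type*} [CommRing R] {P : Ideal R}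
    {p g : Polynomial R} (hp : p.Monic) (h : p * g ∈ P.map Polynomial.C) :
    g ∈ P.map Polynomial.C := by
  have hker : P.map Polynomial.C = RingHom.ker (Polynomial.mapRingHom (Ideal.Quotient.mk P)) := by
    rw [Polynomial.ker_mapRingHom, Ideal.mk_ker]
  rw [hker, RingHom.mem_ker, Polynomial.coe_mapRingHom] at h ⊢
  rw [Polynomial.map_mul] at h
  exact (hp.map _).mul_right_eq_zero_iff.1 h

variable {σ k : Type*} [CommRing k]

/-- The isomorphism that views a multivariate polynomial as a polynomial in the variable `v`. -/
def isolateVar [DecidableEq σ] (v : σ) :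
    MvPolynomial σ k ≃ₐ[k] Polynomial (MvPolynomial {w // w ≠ v} k) :=
  (renameEquiv k (Equiv.optionSubtypeNe v).symm).trans (optionEquivLeft k _)

theorem isolateVar_X [DecidableEq σ] (v : σ) :
    isolateVar v (X v : MvPolynomial σ k) = Polynomial.X := by
  simp [isolateVar]

theorem natDegree_isolateVar [DecidableEq σ] (v : σ) (p : MvPolynomial σ k) :
    (isolateVar v p).natDegree = degreeOf v p := by
  have hv : (none : Option {w // w ≠ v}) = (Equiv.optionSubtypeNe v).symm v := by simp
  rw [isolateVar, AlgEquiv.trans_apply, natDegree_optionEquivLeft, hv, renameEquiv_apply,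
    degreeOf_rename_of_injective (Equiv.injective _)]

/-- `p` is monic as a polynomial in the variable `v`. -/
def MonicIn (v : σ) (p : MvPolynomial σ k) : Prop :=
  ∃ (D : ℕ) (q : MvPolynomial σ k), p = X v ^ D + q ∧ ∀ a ∈ q.support, a v < D

theorem MonicIn.monic_isolateVar [DecidableEq σ] {v : σ} {p : MvPolynomial σ k}
    (hp : MonicIn v p) : (isolateVar v p).Monic := by
  obtain ⟨D, q, rfl, hq⟩ := hp
  rw [map_add, map_pow, isolateVar_X]
  refine Polynomial.monic_X_pow_add ?_
  obtain h | ⟨a, ha⟩ := q.support.eq_empty_or_nonempty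
  · simp [support_eq_empty.1 h]
  · refine Polynomial.degree_le_natDegree.trans_lt (Nat.cast_lt.2 ?_)
    rw [natDegree_isolateVar]
    exact (degreeOf_lt_iff ((Nat.zero_le _).trans_lt (hq a ha))).2 hq

theorem MonicIn.mem_span_of_mul_mem {v : σ} {p g : MvPolynomial σ k} (hp : MonicIn v p)
    {s : Set (MvPolynomial σ k)} (hs : ∀ x ∈ s, degreeOf v x = 0) (h : p * g ∈ Ideal.span s) :
    g ∈ Ideal.span s := by
  classical
  have hspan : (Ideal.span s).map (isolateVar v) =
      (Ideal.span ((fun x => (isolateVar v x).coeff 0) '' s)).map Polynomial.C := by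
    rw [Ideal.map_span, Ideal.map_span, Set.image_image]
    congr 1
    exact Set.image_congr fun x hx =>
      Polynomial.eq_C_of_natDegree_eq_zero ((natDegree_isolateVar v x).trans (hs x hx))
  have hmem (x : MvPolynomial σ k) :
      x ∈ Ideal.span s ↔ isolateVar v x ∈ (Ideal.span s).map (isolateVar v) := by
    simp [Ideal.mem_map_of_equiv]
  rw [hmem, hspan] at h ⊢
  exact mem_map_C_of_monic_mul_mem hp.monic_isolateVar (by rwa [← map_mul])

theorem isWeaklyRegular_map_of_monicIn {P : σ → MvPolynomial σ k} {vs : List σ} (hvs : vs.Nodup)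
    (hP : ∀ v ∈ vs, MonicIn v (P v)) (hdeg : ∀ v ∈ vs, ∀ w ∈ vs, v ≠ w → degreeOf v (P w) = 0) :
    IsWeaklyRegular (MvPolynomial σ k) (vs.map P) := by
  refine ⟨fun i hi => ?_⟩
  rw [isSMulRegular_quotient_iff_mem_of_smul_mem]
  intro x hx
  rw [Ideal.smul_eq_mul, Ideal.mul_top] at hx ⊢
  rw [List.length_map] at hi
  rw [List.getElem_map] at hx
  refine (hP vs[i] (List.getElem_mem hi)).mem_span_of_mul_mem ?_ hx
  rintro _ hy
  rw [Set.mem_ofPred_eq, ← List.map_take, List.mem_map] at hy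
  obtain ⟨w, hw, rfl⟩ := hy
  refine hdeg _ (List.getElem_mem hi) _ (List.mem_of_mem_take hw) ?_
  rintro rfl
  obtain ⟨j, hj, hji⟩ := List.mem_take_iff_getElem.1 hw
  have := hvs.getElem_inj_iff.1 hji
  omega

end MonicIn

section Relation

theorem rename_weightedHomogeneousComponent {σ τ R Γ : Type*} [CommSemiring R] [AddCommMonoid Γ]
    (w : σ → Γ) (e : τ → σ) (γ : Γ) (p : MvPolynomial τ R) :
    rename e (weightedHomogeneousComponent (w ∘ e) γ p) =
      weightedHomogeneousComponent w γ (rename e p) := by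
  classical
  induction p using MvPolynomial.induction_on' with
  | monomial u a =>
    have hweight : Finsupp.weight w (u.mapDomain e) = Finsupp.weight (w ∘ e) u :=
      Finsupp.linearCombination_mapDomain ℕ e u
    rw [rename_monomial,
      weightedHomogeneousComponent_of_mem (isWeightedHomogeneous_monomial (w ∘ e) u a rfl),
      weightedHomogeneousComponent_of_mem (isWeightedHomogeneous_monomial w _ a hweight)]
    split_ifs
    · rw [rename_monomial]
    · rw [map_zero]
  | add p q hp hq => simp only [map_add, hp, hq]

theorem exists_isWeightedHomogeneous_ne_zero_rename_mem {σ τ k Γ : Type*} [Finite σ] [Fintype τ]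
    [Field k] [AddCommMonoid Γ] {w : σ → Γ} {I J : Ideal (MvPolynomial σ k)}
    (hI : ∀ p ∈ I, ∀ γ, weightedHomogeneousComponent w γ p ∈ I)
    (hJ : ringKrullDim (MvPolynomial σ k ⧸ J) < Fintype.card τ) {e : τ → σ}
    {b : MvPolynomial τ k} (hb : b ≠ 0) (hbJ : ∀ p ∈ J, ∃ t : ℕ, rename e b ^ t * p ∈ I) :
    ∃ γ, ∃ q : MvPolynomial τ k, q.IsWeightedHomogeneous (w ∘ e) γ ∧ q ≠ 0 ∧ rename e q ∈ I := by
  classical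
  have hdep : ¬ AlgebraicIndependent k fun l => Ideal.Quotient.mkₐ k J (X (e l)) :=
    fun h => hJ.not_ge (card_le_ringKrullDim_of_algebraicIndependent h)
  rw [algebraicIndependent_iff] at hdep
  push Not at hdep
  obtain ⟨q, hq, hq0⟩ := hdep
  have hqJ : rename e q ∈ J := by
    rw [← comp_aeval_apply, Ideal.Quotient.mkₐ_eq_mk, Ideal.Quotient.eq_zero_iff_mem] at hq
    rwa [rename_eq_aeval]
  obtain ⟨t, ht⟩ := hbJ _ hqJ
  obtain ⟨a, ha⟩ := support_nonempty.2 (mul_ne_zero (pow_ne_zero t hb) hq0)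
  refine ⟨Finsupp.weight (w ∘ e) a, weightedHomogeneousComponent (w ∘ e) _ (b ^ t * q),
    weightedHomogeneousComponent_isWeightedHomogeneous .., ?_, ?_⟩
  · refine ne_zero_iff.2 ⟨a, ?_⟩
    rw [coeff_weightedHomogeneousComponent, if_pos rfl]
    exact mem_support_iff.1 ha
  · rw [rename_weightedHomogeneousComponent, map_mul, map_pow]
    exact hI _ ht _

theorem monicIn_rename_homogenize {σ k : Type*} [CommRing k] {v z : σ} (hvz : v ≠ z)
    {h : Polynomial k} (hh : h.Monic) : MonicIn v (rename ![v, z] (h.homogenize h.natDegree)) := by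
  have hinj : Function.Injective ![v, z] := by
    simp [Function.Injective, Fin.forall_fin_two, hvz, hvz.symm]
  refine ⟨h.natDegree, rename ![v, z] (h.eraseLead.homogenize h.natDegree), ?_, fun a ha => ?_⟩
  · have hdecomp : h = Polynomial.X ^ h.natDegree + h.eraseLead := by
      conv_lhs => rw [← h.eraseLead_add_monomial_natDegree_leadingCoeff, hh.leadingCoeff, add_comm,
        ← Polynomial.X_pow_eq_monomial]
    calc rename ![v, z] (h.homogenize h.natDegree)
        = rename ![v, z] ((Polynomial.X ^ h.natDegree + h.eraseLead).homogenize h.natDegree) := by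
          rw [← hdecomp]
      _ = X v ^ h.natDegree + rename ![v, z] (h.eraseLead.homogenize h.natDegree) := by simp
  · obtain ⟨u, rfl, hu⟩ := coeff_rename_ne_zero _ _ _ (mem_support_iff.1 ha)
    rw [Polynomial.coeff_homogenize, ite_ne_right_iff] at hu
    have hv : u.mapDomain ![v, z] v = u 0 := Finsupp.mapDomain_apply hinj u 0
    rw [hv]
    exact Polynomial.lt_natDegree_of_mem_eraseLead_support (Polynomial.mem_support_iff.2 hu.2)

theorem degreeOf_rename_eq_zero {σ τ k : Type*} [CommSemiring k] {e : τ → σ} {u : σ}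
    (hu : u ∉ Set.range e) (p : MvPolynomial τ k) : degreeOf u (rename e p) = 0 := by
  classical
  by_contra h
  obtain ⟨l, -, rfl⟩ := mem_vars_rename e p (mem_vars_iff_degreeOf_ne_zero.2 h)
  exact hu ⟨l, rfl⟩

theorem exists_eq_rename_homogenize {k : Type*} [CommSemiring k] {q : MvPolynomial (Fin 3) k}
    {α β : ℕ} (hq : ∀ a ∈ q.support, a 0 + a 1 = α ∧ a 2 = β) :
    ∃ h : Polynomial k, h.natDegree ≤ α ∧
      q = X 2 ^ β * rename ![0, 1] (h.homogenize α) := by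
  refine ⟨∑ a ∈ q.support, Polynomial.monomial (a 0) (coeff a q), ?_, ?_⟩
  · refine Polynomial.natDegree_sum_le_of_forall_le _ _ fun a ha => ?_
    have := (hq a ha).1
    exact (Polynomial.natDegree_monomial_le _).trans (by omega)
  · rw [Polynomial.homogenize_finsetSum, map_sum, Finset.mul_sum]
    conv_lhs => rw [q.as_sum]
    refine Finset.sum_congr rfl fun a ha => ?_
    obtain ⟨h01, h2⟩ := hq a ha
    have ha : a = Finsupp.single 2 β +
        Finsupp.mapDomain ![0, 1] (fun₀ | 0 => a 0 | 1 => α - a 0) := by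
      rw [Finsupp.update_eq_add_single (by simp), Finsupp.mapDomain_add, Finsupp.mapDomain_single,
        Finsupp.mapDomain_single]
      ext l
      fin_cases l <;> simp <;> omega
    rw [Polynomial.homogenize_monomial (by omega), rename_monomial, X_pow_eq_monomial,
      monomial_mul, one_mul, ← ha]

theorem exists_monic_dvd_of_bihomogeneous {k : Type*} [Field k] {q : MvPolynomial (Fin 3) k}
    (hq0 : q ≠ 0) {α β : ℕ} (hq : ∀ a ∈ q.support, a 0 + a 1 = α ∧ a 2 = β) :
    ∃ h : Polynomial k, h.Monic ∧
      q ∣ (X 1 * X 2) ^ (α + β) * rename ![0, 1] (h.homogenize h.natDegree) := by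
  obtain ⟨h, hdeg, rfl⟩ := exists_eq_rename_homogenize hq
  have h0 : h ≠ 0 := by
    rintro rfl
    exact hq0 (by simp)
  have hlc : h.leadingCoeff ≠ 0 := Polynomial.leadingCoeff_ne_zero.2 h0
  set h₁ := h * Polynomial.C h.leadingCoeff⁻¹
  have hh₁ : h₁.Monic := Polynomial.monic_mul_leadingCoeff_inv h0
  have hdeg₁ : h₁.natDegree ≤ α := (Polynomial.natDegree_mul_C_le _ _).trans hdeg
  obtain ⟨γ, rfl⟩ := Nat.exists_eq_add_of_le' hdeg₁
  have hfac : rename ![0, 1] (h.homogenize (γ + h₁.natDegree)) =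
      (C h.leadingCoeff * X 1 ^ γ * rename ![0, 1] (h₁.homogenize h₁.natDegree) :
        MvPolynomial (Fin 3) k) := by
    have hh : h = Polynomial.C h.leadingCoeff * 1 * h₁ := by
      simp only [h₁, mul_one]
      rw [mul_comm h, ← mul_assoc, ← Polynomial.C_mul, mul_inv_cancel₀ hlc, map_one, one_mul]
    conv_lhs => rw [hh]
    rw [mul_assoc, Polynomial.homogenize_C_mul, Polynomial.homogenize_mul _ _ (by simp) le_rfl]
    simp [mul_assoc]
  refine ⟨h₁, hh₁, C h.leadingCoeff⁻¹ * X 1 ^ (h₁.natDegree + β) * X 2 ^ (γ + h₁.natDegree), ?_⟩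
  have hC : (C h.leadingCoeff * C h.leadingCoeff⁻¹ : MvPolynomial (Fin 3) k) = 1 := by
    rw [← C_mul, mul_inv_cancel₀ hlc, C_1]
  rw [hfac]
  linear_combination
    (-(X 1 * X 2) ^ (γ + h₁.natDegree + β) * rename ![0, 1] (h₁.homogenize h₁.natDegree)) * hC

theorem exists_monicIn_mul_mem {σ k Γ : Type*} [Finite σ] [Field k] [AddCommMonoid Γ] {w : σ → Γ}
    {I J : Ideal (MvPolynomial σ k)} (hI : ∀ p ∈ I, ∀ γ, weightedHomogeneousComponent w γ p ∈ I)
    (hJ : ringKrullDim (MvPolynomial σ k ⧸ J) ≤ 2) {v z y : σ} (hvz : v ≠ z) (hw : w v = w z)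
    (hzy : LinearIndependent ℕ ![w z, w y]) (hIJ : ∀ p ∈ J, ∃ t : ℕ, (X z * X y) ^ t * p ∈ I) :
    ∃ p, MonicIn v p ∧ (∀ u, u ≠ v → u ≠ z → degreeOf u p = 0) ∧
      ∃ t : ℕ, (X z * X y) ^ t * p ∈ I := by
  have hlt : (2 : WithBot ℕ∞) < Fintype.card (Fin 3) := by
    rw [Fintype.card_fin]
    exact Nat.cast_lt.2 (Nat.lt_succ_self 2)
  have hren : rename ![v, z, y] (X 1 * X 2 : MvPolynomial (Fin 3) k) = X z * X y := by simp
  have hX : (X 1 * X 2 : MvPolynomial (Fin 3) k) ≠ 0 := mul_ne_zero (X_ne_zero 1) (X_ne_zero 2)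
  obtain ⟨γ, q, hqγ, hq0, hqI⟩ := exists_isWeightedHomogeneous_ne_zero_rename_mem hI
    (hJ.trans_lt hlt) hX (e := ![v, z, y]) (by rwa [hren])
  have hweight (a : Fin 3 →₀ ℕ) :
      Finsupp.weight (w ∘ ![v, z, y]) a = (a 0 + a 1) • w z + a 2 • w y := by
    rw [Finsupp.weight_apply, Finsupp.sum_fintype _ _ (by simp), Fin.sum_univ_three]
    simp [hw, add_smul]
  obtain ⟨a₀, ha₀⟩ := support_nonempty.2 hq0
  obtain ⟨h, hh, hdvd⟩ := exists_monic_dvd_of_bihomogeneous hq0 (α := a₀ 0 + a₀ 1) (β := a₀ 2)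
    fun a ha => LinearIndependent.pair_iffₛ.1 hzy _ _ _ _ (by
      rw [← hweight, ← hweight, hqγ (mem_support_iff.1 ha), hqγ (mem_support_iff.1 ha₀)])
  refine ⟨rename ![v, z] (h.homogenize h.natDegree), monicIn_rename_homogenize hvz hh,
    fun u hu hz => degreeOf_rename_eq_zero ?_ _, a₀ 0 + a₀ 1 + a₀ 2, ?_⟩
  · simp [hu, hz]
  · have hcomp : ![v, z, y] ∘ ![0, 1] = ![v, z] := by
      ext l
      fin_cases l <;> rfl
    have := map_dvd (rename ![v, z, y]) hdvd
    rw [map_mul, map_pow, hren, rename_rename, hcomp] at this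
    exact I.mem_of_dvd this hqI

theorem weightedHomogeneousComponent_mem_span_range {ι σ k Γ : Type*} [CommRing k]
    [AddCommMonoid Γ] {w : σ → Γ} {f : ι → MvPolynomial σ k} {δ : ι → Γ}
    (hf : ∀ l, (f l).IsWeightedHomogeneous w (δ l)) {p : MvPolynomial σ k}
    (hp : p ∈ Ideal.span (Set.range f)) (γ : Γ) :
    weightedHomogeneousComponent w γ p ∈ Ideal.span (Set.range f) := by
  classical
  let := MvPolynomial.weightedGradedAlgebra k w
  refine weightedHomogeneousComponent_mem_of_mem k w (Ideal.homogeneous_span _ _ ?_) hp γ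
  rintro _ ⟨l, rfl⟩
  exact ⟨δ l, hf l⟩

theorem koszulAcyclicAway_of_ringKrullDim_le {ι σ k Γ : Type*} [LinearOrder ι] [Fintype ι]
    [Fintype σ] [Field k] [AddCommMonoid Γ] {w : σ → Γ} {f : ι → MvPolynomial σ k} {δ : ι → Γ}
    (hf : ∀ l, (f l).IsWeightedHomogeneous w (δ l)) (hcard : Fintype.card ι + 2 ≤ Fintype.card σ)
    {J : Ideal (MvPolynomial σ k)} (hJ : ringKrullDim (MvPolynomial σ k ⧸ J) ≤ 2) {i j : σ}
    (hij : LinearIndependent ℕ ![w i, w j]) (hw : ∀ v, w v = w i ∨ w v = w j)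
    (hfJ : ∀ p ∈ J, ∃ t : ℕ, (X i * X j) ^ t * p ∈ Ideal.span (Set.range f)) :
    KoszulAcyclicAway f (X i * X j) := by
  classical
  have hI (p) (hp : p ∈ Ideal.span (Set.range f)) (γ : Γ) :=
    weightedHomogeneousComponent_mem_span_range hf hp γ
  have hrel (v : σ) : ∃ p, v ≠ i → v ≠ j → MonicIn v p ∧
      (∀ u, u ≠ v → u ≠ i → u ≠ j → degreeOf u p = 0) ∧
      ∃ t : ℕ, (X i * X j) ^ t * p ∈ Ideal.span (Set.range f) := by
    by_cases hv : v = i ∨ v = j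
    · exact ⟨0, fun hi hj => absurd hv (by tauto)⟩
    push Not at hv
    obtain hwv | hwv := hw v
    · obtain ⟨p, hp, hdeg, hmem⟩ := exists_monicIn_mul_mem hI hJ hv.1 hwv hij hfJ
      exact ⟨p, fun _ _ => ⟨hp, fun u hu hi _ => hdeg u hu hi, hmem⟩⟩
    · simp only [mul_comm (X i : MvPolynomial σ k)] at hfJ ⊢
      obtain ⟨p, hp, hdeg, hmem⟩ := exists_monicIn_mul_mem hI hJ hv.2 hwv
        (LinearIndependent.pair_iffₛ.2 fun a b a' b' h =>
          (LinearIndependent.pair_iffₛ.1 hij b a b' a' (by rw [add_comm, h, add_comm])).symm) hfJ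
      exact ⟨p, fun _ _ => ⟨hp, fun u hu _ hj => hdeg u hu hj, hmem⟩⟩
  choose P hP using hrel
  have hmem {v : σ} : v ∈ ({i, j}ᶜ : Finset σ).toList ↔ v ≠ i ∧ v ≠ j := by simp
  refine koszulAcyclicAway_of_isWeaklyRegular (rs := ({i, j}ᶜ : Finset σ).toList.map P)
    (isWeaklyRegular_map_of_monicIn (Finset.nodup_toList _)
      (fun v hv => (hP v (hmem.1 hv).1 (hmem.1 hv).2).1)
      fun v hv u hu hvu => (hP u (hmem.1 hu).1 (hmem.1 hu).2).2.1 v hvu (hmem.1 hv).1 (hmem.1 hv).2)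
    (fun p hp => ?_) ?_
  · obtain ⟨v, hv, rfl⟩ := List.mem_map.1 hp
    exact (hP v (hmem.1 hv).1 (hmem.1 hv).2).2.2
  · rw [List.length_map, Finset.length_toList, Finset.card_compl]
    have := Finset.card_le_two (a := i) (b := j)
    omega

end Relation

section Laurent

/-- Laurent polynomials over `k` in the variables `V`. -/
abbrev MvLaurent (k V : Type*) [Field k] := AddMonoidAlgebra k (V → ℤ)

variable {k V Γ : Type*} [Field k] [AddCommGroup Γ]

/-- The exponent vector of a monomial, as an exponent vector of a Laurent monomial. -/
def exponent : (V →₀ ℕ) →+ (V → ℤ) where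
  toFun b v := b v
  map_zero' := by ext; simp
  map_add' _ _ := by ext; simp

/-- Laurent polynomials form an algebra over the polynomials in the same variables. -/
instance MvLaurent.algebra : Algebra (MvPolynomial V k) (MvLaurent k V) :=
  (AddMonoidAlgebra.mapDomainRingHom k exponent).toAlgebra

theorem exponent_apply (b : V →₀ ℕ) (v : V) : exponent b v = b v := rfl

theorem exponent_injective : Function.Injective (exponent : (V →₀ ℕ) → V → ℤ) := fun a b h => by
  ext v
  exact Nat.cast_injective (congr_fun h v)

theorem algebraMap_monomial (b : V →₀ ℕ) (r : k) :
    algebraMap (MvPolynomial V k) (MvLaurent k V) (monomial b r) =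
      AddMonoidAlgebra.single (exponent b) r := by
  simp [RingHom.algebraMap_toAlgebra, monomial]

theorem coeff_algebraMap_exponent (p : MvPolynomial V k) (b : V →₀ ℕ) :
    (algebraMap _ (MvLaurent k V) p).coeff (exponent b) = coeff b p := by
  classical
  induction p using MvPolynomial.induction_on' with
  | monomial u a =>
    rw [algebraMap_monomial, AddMonoidAlgebra.coeff_single, Finsupp.single_apply, coeff_monomial]
    simp only [exponent_injective.eq_iff]
  | add p q hp hq =>
    rw [map_add, AddMonoidAlgebra.coeff_add, Finsupp.add_apply, hp, hq, coeff_add]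

theorem algebraMap_mvLaurent_injective :
    Function.Injective (algebraMap (MvPolynomial V k) (MvLaurent k V)) := fun p q h => by
  ext b
  rw [← coeff_algebraMap_exponent, ← coeff_algebraMap_exponent, h]

/-- The Laurent polynomials all of whose exponents satisfy `P`. -/
def laurentSupported (k : Type*) [Field k] (P : (V → ℤ) → Prop) : AddSubgroup (MvLaurent k V) where
  carrier := {c | ∀ a, c.coeff a ≠ 0 → P a}
  zero_mem' _ h := absurd rfl h
  add_mem' {x y} hx hy a h := by
    by_contra hP
    refine h ?_
    rw [AddMonoidAlgebra.coeff_add, Finsupp.add_apply, of_not_not (mt (hx a) hP),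
      of_not_not (mt (hy a) hP), add_zero]
  neg_mem' {x} hx a h := hx a fun h0 => h (by
    rw [AddMonoidAlgebra.coeff_neg, Finsupp.neg_apply, h0, neg_zero])

variable {P Q : (V → ℤ) → Prop}

theorem mem_laurentSupported {c : MvLaurent k V} :
    c ∈ laurentSupported k P ↔ ∀ a, c.coeff a ≠ 0 → P a := Iff.rfl

theorem algebraMap_mem_laurentSupported (p : MvPolynomial V k) :
    algebraMap _ (MvLaurent k V) p ∈
      laurentSupported k fun a => ∃ b ∈ p.support, exponent b = a := by
  classical
  rw [p.as_sum, map_sum, ← p.as_sum]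
  refine sum_mem fun b hb a ha => ⟨b, hb, ?_⟩
  rw [algebraMap_monomial, AddMonoidAlgebra.coeff_single, Finsupp.single_apply] at ha
  exact of_not_not fun h => ha (if_neg h)

theorem exists_algebraMap_eq_of_nonneg [Finite V] {c : MvLaurent k V}
    (hc : c ∈ laurentSupported k fun a => ∀ v, 0 ≤ a v) :
    ∃ p : MvPolynomial V k, algebraMap _ _ p = c := by
  refine ⟨∑ a ∈ c.coeff.support,
    monomial (Finsupp.equivFunOnFinite.symm fun v => (a v).toNat) (c.coeff a), ?_⟩
  rw [map_sum]
  conv_rhs => rw [← AddMonoidAlgebra.sum_coeff_single c]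
  refine Finset.sum_congr rfl fun a ha => ?_
  rw [algebraMap_monomial]
  congr 1
  ext v
  simp [exponent_apply, hc a (Finsupp.mem_support_iff.1 ha) v]

theorem mul_mem_laurentSupported {R : (V → ℤ) → Prop} {x y : MvLaurent k V}
    (hx : x ∈ laurentSupported k P) (hy : y ∈ laurentSupported k Q)
    (h : ∀ a b, P a → Q b → R (a + b)) : x * y ∈ laurentSupported k R := fun c hc => by
  classical
  obtain ⟨a, ha, b, hb, rfl⟩ := Finset.mem_add.1
    (AddMonoidAlgebra.support_coeff_mul_subset x y (Finsupp.mem_support_iff.2 hc))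
  exact h a b (hx a (Finsupp.mem_support_iff.1 ha)) (hy b (Finsupp.mem_support_iff.1 hb))

theorem smul_mem_laurentSupported {p : MvPolynomial V k} {c : MvLaurent k V}
    (hc : c ∈ laurentSupported k P) (h : ∀ b ∈ p.support, ∀ a, P a → Q (exponent b + a)) :
    p • c ∈ laurentSupported k Q := by
  rw [Algebra.smul_def]
  refine mul_mem_laurentSupported (algebraMap_mem_laurentSupported p) hc ?_
  rintro _ a ⟨b, hb, rfl⟩ ha
  exact h b hb a ha

theorem single_mul_mem_laurentSupported {e : V → ℤ} {c : MvLaurent k V}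
    (hc : c ∈ laurentSupported k P) (h : ∀ a, P a → Q (e + a)) :
    AddMonoidAlgebra.single e 1 * c ∈ laurentSupported k Q := by
  classical
  have he : (AddMonoidAlgebra.single e 1 : MvLaurent k V) ∈ laurentSupported k (e = ·) :=
    fun a ha => by
      rw [AddMonoidAlgebra.coeff_single, Finsupp.single_apply] at ha
      exact of_not_not fun h => ha (if_neg h)
  exact mul_mem_laurentSupported he hc fun _ a hb ha => hb ▸ h a ha

/-- The sum of the terms of a Laurent polynomial whose exponents satisfy `P`. -/
def laurentRestrict (P : (V → ℤ) → Prop) : MvLaurent k V →+ MvLaurent k V where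
  toFun c := by classical exact AddMonoidAlgebra.ofCoeff (c.coeff.filter P)
  map_zero' := by classical ext a; simp [Finsupp.filter_apply]
  map_add' x y := by classical ext a; simp [Finsupp.filter_apply]

theorem coeff_laurentRestrict_of_pos (c : MvLaurent k V) {a : V → ℤ} (h : P a) :
    (laurentRestrict P c).coeff a = c.coeff a := by
  classical exact Finsupp.filter_apply_pos P _ h

theorem coeff_laurentRestrict_of_neg (c : MvLaurent k V) {a : V → ℤ} (h : ¬P a) :
    (laurentRestrict P c).coeff a = 0 := by
  classical exact Finsupp.filter_apply_neg P _ h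

theorem laurentRestrict_mem {c : MvLaurent k V} (hc : c ∈ laurentSupported k Q) :
    laurentRestrict P c ∈ laurentSupported k fun a => P a ∧ Q a := fun a ha => by
  by_cases hP : P a
  · exact ⟨hP, hc a (by rwa [coeff_laurentRestrict_of_pos c hP] at ha)⟩
  · exact absurd (coeff_laurentRestrict_of_neg c hP) ha

theorem laurentRestrict_eq_self {c : MvLaurent k V} (hc : c ∈ laurentSupported k P) :
    laurentRestrict P c = c := by
  ext a
  by_cases hP : P a
  · exact coeff_laurentRestrict_of_pos c hP
  · rw [coeff_laurentRestrict_of_neg c hP, of_not_not (mt (hc a) hP)]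

theorem laurentRestrict_eq_zero {c : MvLaurent k V} (hc : c ∈ laurentSupported k (¬P ·)) :
    laurentRestrict P c = 0 := by
  ext a
  by_cases hP : P a
  · rw [coeff_laurentRestrict_of_pos c hP, of_not_not fun h => hc a h hP]
    rfl
  · exact coeff_laurentRestrict_of_neg c hP

theorem laurentRestrict_add_laurentRestrict_not (c : MvLaurent k V) :
    laurentRestrict P c + laurentRestrict (¬P ·) c = c := by
  ext a
  rw [AddMonoidAlgebra.coeff_add, Finsupp.add_apply]
  by_cases hP : P a
  · rw [coeff_laurentRestrict_of_pos c hP,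
      coeff_laurentRestrict_of_neg (P := (¬P ·)) c (not_not.2 hP), add_zero]
  · rw [coeff_laurentRestrict_of_neg c hP, coeff_laurentRestrict_of_pos (P := (¬P ·)) c hP,
      zero_add]

theorem laurentRestrict_smul {p : MvPolynomial V k}
    (h : ∀ b ∈ p.support, ∀ a, Q (exponent b + a) ↔ P a) (c : MvLaurent k V) :
    laurentRestrict Q (p • c) = p • laurentRestrict P c := by
  have htop : c ∈ laurentSupported k fun _ => True := fun _ _ => trivial
  have hpos : p • laurentRestrict P c ∈ laurentSupported k Q :=
    smul_mem_laurentSupported (laurentRestrict_mem htop) fun b hb a ha => (h b hb a).2 ha.1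
  have hneg : p • laurentRestrict (¬P ·) c ∈ laurentSupported k (¬Q ·) :=
    smul_mem_laurentSupported (laurentRestrict_mem htop) fun b hb a ha => mt (h b hb a).1 ha.1
  conv_lhs => rw [← laurentRestrict_add_laurentRestrict_not (P := P) c, smul_add, map_add]
  rw [laurentRestrict_eq_self hpos, laurentRestrict_eq_zero hneg, add_zero]

theorem sum_laurentRestrict_fiber {β : Type*} [Fintype β] (φ : (V → ℤ) → β) (c : MvLaurent k V) :
    ∑ x, laurentRestrict (φ · = x) c = c := by
  ext a
  rw [AddMonoidAlgebra.coeff_sum, Finsupp.finsetSum_apply,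
    Finset.sum_eq_single_of_mem (φ a) (Finset.mem_univ _) fun x _ hx =>
      coeff_laurentRestrict_of_neg (P := (φ · = x)) c hx.symm]
  exact coeff_laurentRestrict_of_pos (P := (φ · = φ a)) c rfl

/-- The degree `∑ v, a v • w v` of the Laurent monomial with exponent `a`, where the variable `v`
has degree `w v`. -/
def laurentDegree [Fintype V] (w : V → Γ) : (V → ℤ) →+ Γ where
  toFun a := ∑ v, a v • w v
  map_zero' := by simp
  map_add' a b := by simp [add_smul, Finset.sum_add_distrib]

theorem laurentDegree_exponent [Fintype V] (w : V → Γ) (b : V →₀ ℕ) :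
    laurentDegree w (exponent b) = Finsupp.weight w b := by
  rw [Finsupp.weight_apply, Finsupp.sum_fintype _ _ fun v => zero_smul ℕ (w v)]
  exact Finset.sum_congr rfl fun v _ => natCast_zsmul (w v) (b v)

theorem laurentDegree_exponent_of_mem_support [Fintype V] {w : V → Γ} {p : MvPolynomial V k}
    {δ : Γ} (hp : p.IsWeightedHomogeneous w δ) {b : V →₀ ℕ} (hb : b ∈ p.support) :
    laurentDegree w (exponent b) = δ :=
  (laurentDegree_exponent w b).trans (hp (mem_support_iff.1 hb))

end Laurent

section Column

variable {k V ι Γ : Type*} [Field k] [AddCommGroup Γ]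

/-- The Koszul cochains whose component at `T` has all its exponents in `P T`. -/
def laurentChains (k : Type*) [Field k] (P : Finset ι → (V → ℤ) → Prop) :
    AddSubgroup (Finset ι → MvLaurent k V) :=
  AddSubgroup.pi Set.univ fun T => laurentSupported k (P T)

variable {P Q : Finset ι → (V → ℤ) → Prop} {z : Finset ι → MvLaurent k V}
  {f : ι → MvPolynomial V k}

theorem mem_laurentChains : z ∈ laurentChains k P ↔ ∀ T a, (z T).coeff a ≠ 0 → P T a := by
  simp only [laurentChains, AddSubgroup.mem_pi, Set.mem_univ, forall_const, mem_laurentSupported]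

theorem laurentChains_mono (h : ∀ T a, P T a → Q T a) : laurentChains k P ≤ laurentChains k Q :=
  fun _ hz => mem_laurentChains.2 fun T a ha => h T a (mem_laurentChains.1 hz T a ha)

theorem laurentChains_eq_bot (h : ∀ T a, ¬P T a) : laurentChains k P = ⊥ := by
  refine (AddSubgroup.eq_bot_iff_forall _).2 fun z hz => ?_
  ext T a
  exact of_not_not fun ha => h T a (mem_laurentChains.1 hz T a ha)

/-- The part of a Koszul cochain whose exponents at `T` satisfy `P T`. -/
def chainRestrict (P : Finset ι → (V → ℤ) → Prop) :
    (Finset ι → MvLaurent k V) →+ (Finset ι → MvLaurent k V) :=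
  AddMonoidHom.mk' (fun z T => laurentRestrict (P T) (z T)) fun z z' => funext fun T =>
    map_add (laurentRestrict (P T)) (z T) (z' T)

theorem chainRestrict_mem (hz : z ∈ laurentChains k Q) :
    chainRestrict P z ∈ laurentChains k fun T a => P T a ∧ Q T a :=
  mem_laurentChains.2 fun T => laurentRestrict_mem (mem_laurentChains.1 hz T)

theorem chainRestrict_eq_self (hz : z ∈ laurentChains k P) : chainRestrict P z = z :=
  funext fun T => laurentRestrict_eq_self (mem_laurentChains.1 hz T)

theorem sum_chainRestrict_fiber {β : Type*} [Fintype β] (φ : (V → ℤ) → β)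
    (z : Finset ι → MvLaurent k V) : ∑ x, chainRestrict (fun _ a => φ a = x) z = z := by
  ext1 T
  rw [Finset.sum_apply]
  exact sum_laurentRestrict_fiber φ (z T)

theorem koszulD_mem_laurentChains [LinearOrder ι] [Fintype ι] (hz : z ∈ laurentChains k P)
    (h : ∀ i, ∀ b ∈ (f i).support, ∀ T, i ∉ T → ∀ a, P (insert i T) a → Q T (exponent b + a)) :
    koszulD f z ∈ laurentChains k Q :=
  mem_laurentChains.2 <| koszulD_apply_mem f (fun T => laurentSupported k (Q T)) fun i T hi =>
    smul_mem_laurentSupported (mem_laurentChains.1 hz (insert i T)) fun b hb => h i b hb T hi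

theorem koszulD_chainRestrict [LinearOrder ι] [Fintype ι]
    (h : ∀ i, ∀ b ∈ (f i).support, ∀ T, i ∉ T → ∀ a, P (insert i T) a ↔ Q T (exponent b + a))
    (z : Finset ι → MvLaurent k V) :
    koszulD f (chainRestrict P z) = chainRestrict Q (koszulD f z) := by
  ext1 T
  change _ = laurentRestrict (Q T) (koszulD f z T)
  rw [koszulD_apply, koszulD_apply, map_sum]
  refine Finset.sum_congr rfl fun i _ => ?_
  by_cases hi : i ∈ T
  · rw [contract_apply_of_mem hi, contract_apply_of_mem hi, smul_zero, map_zero]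
  · rw [contract_apply_of_notMem hi, contract_apply_of_notMem hi, smul_comm (f i),
      smul_comm (f i), map_zsmul, laurentRestrict_smul fun b hb a => (h i b hb T hi a).symm]
    rfl

theorem algebraMap_koszulD [LinearOrder ι] [Fintype ι] (f : ι → MvPolynomial V k)
    (z : Finset ι → MvPolynomial V k) (T : Finset ι) :
    algebraMap _ (MvLaurent k V) (koszulD f z T) = koszulD f (fun T => algebraMap _ _ (z T)) T :=
  (congr_fun (koszulD_comp f (Algebra.linearMap _ (MvLaurent k V)) z) T).symm

theorem exists_algebraMap_comp_eq_single_mul [Finite V] [Finite ι] {ρ : Finset V}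
    (hz : z ∈ laurentChains k fun _ a => ∀ v, a v < 0 → v ∈ ρ) :
    ∃ (e : V → ℤ) (z₀ : Finset ι → MvPolynomial V k), (∀ v, v ∉ ρ → e v = 0) ∧
      ∀ T, algebraMap _ (MvLaurent k V) (z₀ T) = AddMonoidAlgebra.single e 1 * z T := by
  classical
  obtain ⟨l, hl⟩ : ∃ l : ℤ, ∀ T a, (z T).coeff a ≠ 0 → ∀ v, -a v ≤ l := by
    have hfin : (⋃ (T : Finset ι) (v : V),
        (fun a : V → ℤ => -a v) '' ((z T).coeff.support : Set (V → ℤ))).Finite :=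
      Set.finite_iUnion fun T => Set.finite_iUnion fun v => (Finset.finite_toSet _).image _
    obtain ⟨l, hl⟩ := hfin.bddAbove
    exact ⟨l, fun T a ha v => hl (Set.mem_iUnion₂.2 ⟨T, v, a, Finsupp.mem_support_iff.2 ha, rfl⟩)⟩
  let e : V → ℤ := fun v => if v ∈ ρ then l else 0
  have hpoly (T : Finset ι) : ∃ p : MvPolynomial V k,
      algebraMap _ (MvLaurent k V) p = AddMonoidAlgebra.single e 1 * z T := by
    refine exists_algebraMap_eq_of_nonneg (single_mul_mem_laurentSupported
      (P := fun a => (∀ v, a v < 0 → v ∈ ρ) ∧ ∀ v, -a v ≤ l)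
      (fun a ha => ⟨mem_laurentChains.1 hz T a ha, hl T a ha⟩) fun a ⟨hneg, ha⟩ v => ?_)
    by_cases hv : v ∈ ρ
    · have := ha v
      simp only [Pi.add_apply, e, if_pos hv]
      omega
    · simpa only [Pi.add_apply, e, if_neg hv, zero_add] using not_lt.1 (mt (hneg v) hv)
  choose z₀ hz₀ using hpoly
  exact ⟨e, z₀, fun v hv => if_neg hv, hz₀⟩

variable [Fintype V]

/-- The exponents in Koszul position `T` and homological degree `q` of the degree `μ` strand of the
Koszul complex over the localization of the polynomial ring at the variables in `ρ`; here `w v` is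
the degree of the variable `v` and `δ i` the degree of `f i`. -/
def IsKoszulExponent (w : V → Γ) (δ : ι → Γ) (μ : Γ) (ρ : Finset V) (q : ℕ) (T : Finset ι)
    (a : V → ℤ) : Prop :=
  T.card = q ∧ laurentDegree w a = μ - ∑ i ∈ T, δ i ∧ ∀ v, a v < 0 → v ∈ ρ

variable {w : V → Γ} {δ : ι → Γ} {μ : Γ} {ρ : Finset V} {q : ℕ}

theorem laurentDegree_exponent_add_eq_iff [DecidableEq ι]
    (hf : ∀ i, (f i).IsWeightedHomogeneous w (δ i)) {i : ι} {b : V →₀ ℕ}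
    (hb : b ∈ (f i).support) {T : Finset ι} (hi : i ∉ T) (a : V → ℤ) :
    laurentDegree w (exponent b + a) = μ - ∑ l ∈ T, δ l ↔
      laurentDegree w a = μ - ∑ l ∈ insert i T, δ l := by
  rw [map_add, laurentDegree_exponent_of_mem_support (hf i) hb, Finset.sum_insert hi, add_comm,
    ← eq_sub_iff_add_eq, sub_sub, add_comm (δ i)]

theorem IsKoszulExponent.exponent_add [DecidableEq ι]
    (hf : ∀ i, (f i).IsWeightedHomogeneous w (δ i)) {i : ι} {b : V →₀ ℕ}
    (hb : b ∈ (f i).support) {T : Finset ι} (hi : i ∉ T) {a : V → ℤ}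
    (h : IsKoszulExponent w δ μ ρ (q + 1) (insert i T) a) :
    IsKoszulExponent w δ μ ρ q T (exponent b + a) := by
  obtain ⟨hcard, hdeg, hneg⟩ := h
  refine ⟨by rw [Finset.card_insert_of_notMem hi] at hcard; omega,
    (laurentDegree_exponent_add_eq_iff hf hb hi a).2 hdeg, fun v hv => hneg v ?_⟩
  rw [Pi.add_apply, exponent_apply] at hv
  omega

theorem single_algebraMap_mem_laurentChains [DecidableEq ι] {g : MvPolynomial V k}
    (hg : g.IsWeightedHomogeneous w μ) (ρ : Finset V) :
    (Pi.single ∅ (algebraMap _ _ g) : Finset ι → MvLaurent k V) ∈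
      laurentChains k (IsKoszulExponent w δ μ ρ 0) := by
  refine mem_laurentChains.2 fun T a ha => ?_
  obtain rfl : T = ∅ := of_not_not fun hT => ha (by rw [Pi.single_eq_of_ne hT]; rfl)
  rw [Pi.single_eq_same] at ha
  obtain ⟨b, hb, rfl⟩ := algebraMap_mem_laurentSupported g a ha
  refine ⟨Finset.card_empty, ?_, fun v hv => ?_⟩
  · rw [laurentDegree_exponent_of_mem_support hg hb, Finset.sum_empty, sub_zero]
  · rw [exponent_apply] at hv
    omega

variable [LinearOrder ι] [Fintype ι]

theorem exists_isKoszulExponent_koszulD_eq (hf : ∀ i, (f i).IsWeightedHomogeneous w (δ i))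
    (hz : z ∈ laurentChains k (IsKoszulExponent w δ μ ρ q)) {u : Finset ι → MvLaurent k V}
    (hu : u ∈ laurentChains k fun _ a => ∀ v, a v < 0 → v ∈ ρ) (hdu : koszulD f u = z) :
    ∃ u' ∈ laurentChains k (IsKoszulExponent w δ μ ρ (q + 1)), koszulD f u' = z := by
  let Q (q : ℕ) (T : Finset ι) (a : V → ℤ) : Prop :=
    T.card = q ∧ laurentDegree w a = μ - ∑ l ∈ T, δ l
  have hQ : ∀ l, ∀ b ∈ (f l).support, ∀ T, l ∉ T → ∀ a,
      Q (q + 1) (insert l T) a ↔ Q q T (exponent b + a) := fun l b hb T hl a => by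
    simp only [Q]
    rw [Finset.card_insert_of_notMem hl, laurentDegree_exponent_add_eq_iff hf hb hl, add_left_inj]
  refine ⟨chainRestrict (Q (q + 1)) u,
    laurentChains_mono (fun T a h => ⟨h.1.1, h.1.2, h.2⟩) (chainRestrict_mem hu), ?_⟩
  rw [koszulD_chainRestrict hQ, hdu]
  exact chainRestrict_eq_self (laurentChains_mono (fun T a h => ⟨h.1, h.2.1⟩) hz)

theorem exists_koszulD_eq_of_pow_smul (hf : ∀ i, (f i).IsWeightedHomogeneous w (δ i))
    (hz : z ∈ laurentChains k (IsKoszulExponent w δ μ ρ q)) {e : V → ℤ}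
    (he : ∀ v, v ∉ ρ → e v = 0) {z₀ w₀ : Finset ι → MvPolynomial V k}
    (hz₀ : ∀ T, algebraMap _ (MvLaurent k V) (z₀ T) = AddMonoidAlgebra.single e 1 * z T)
    {i j : V} (hi : i ∈ ρ) (hj : j ∈ ρ) {s : ℕ}
    (hw₀ : koszulD f w₀ = (X i * X j : MvPolynomial V k) ^ s • z₀) :
    ∃ u ∈ laurentChains k (IsKoszulExponent w δ μ ρ (q + 1)), koszulD f u = z := by
  classical
  set b : V →₀ ℕ := s • (Finsupp.single i 1 + Finsupp.single j 1)
  have hb (v : V) (hv : v ∉ ρ) : exponent b v = 0 := by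
    have hvi : i ≠ v := fun h => hv (h ▸ hi)
    have hvj : j ≠ v := fun h => hv (h ▸ hj)
    simp [b, exponent_apply, hvi, hvj]
  have hXX : algebraMap (MvPolynomial V k) (MvLaurent k V) ((X i * X j) ^ s) =
      AddMonoidAlgebra.single (exponent b) 1 := by
    rw [X, X, monomial_mul, monomial_pow, mul_one, one_pow, algebraMap_monomial]
  let c : MvLaurent k V := AddMonoidAlgebra.single (-(exponent b + e)) 1
  let g : MvPolynomial V k →ₗ[MvPolynomial V k] MvLaurent k V :=
    LinearMap.mulLeft _ c ∘ₗ Algebra.linearMap (MvPolynomial V k) (MvLaurent k V)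
  have hg (p : MvPolynomial V k) : g p = c * algebraMap _ _ p := rfl
  have hgz : koszulD f (g ∘ w₀) = z := by
    rw [koszulD_comp, hw₀]
    ext1 T
    rw [Function.comp_apply, hg, Pi.smul_apply, smul_eq_mul, map_mul, hXX, hz₀, ← mul_assoc,
      ← mul_assoc, AddMonoidAlgebra.single_mul_single, AddMonoidAlgebra.single_mul_single,
      add_assoc, neg_add_cancel, mul_one, mul_one, ← AddMonoidAlgebra.one_def, one_mul]
  have hgw : g ∘ w₀ ∈ laurentChains k fun _ a => ∀ v, a v < 0 → v ∈ ρ := by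
    refine mem_laurentChains.2 fun T => single_mul_mem_laurentSupported
      (algebraMap_mem_laurentSupported (w₀ T)) ?_
    rintro _ ⟨b', -, rfl⟩ v hv
    by_contra hvρ
    simp only [Pi.add_apply, Pi.neg_apply, hb v hvρ, he v hvρ, exponent_apply] at hv
    omega
  exact exists_isKoszulExponent_koszulD_eq hf hz hgw hgz

theorem exists_koszulD_eq_of_koszulAcyclicAway (hf : ∀ i, (f i).IsWeightedHomogeneous w (δ i))
    {i j : V} (hacyc : KoszulAcyclicAway f (X i * X j)) (hi : i ∈ ρ) (hj : j ∈ ρ)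
    (hz : z ∈ laurentChains k (IsKoszulExponent w δ μ ρ (q + 1))) (hdz : koszulD f z = 0) :
    ∃ u ∈ laurentChains k (IsKoszulExponent w δ μ ρ (q + 2)), koszulD f u = z := by
  obtain ⟨e, z₀, he, hz₀⟩ :=
    exists_algebraMap_comp_eq_single_mul (laurentChains_mono (fun T a h => h.2.2) hz)
  have hempty : z ∅ = 0 := by
    ext a
    exact of_not_not fun ha => absurd (mem_laurentChains.1 hz ∅ a ha).1 (by simp)
  have hz₀_empty : z₀ ∅ = 0 := algebraMap_mvLaurent_injective (by
    rw [hz₀, hempty, mul_zero, map_zero])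
  have hdz₀ : koszulD f z₀ = 0 := by
    have h : (fun T => algebraMap _ _ (z₀ T)) =
        LinearMap.mulLeft (MvPolynomial V k) (AddMonoidAlgebra.single e 1) ∘ z := funext hz₀
    ext1 T
    refine algebraMap_mvLaurent_injective ?_
    rw [algebraMap_koszulD, h, koszulD_comp, hdz, Function.comp_apply, Pi.zero_apply, map_zero,
      Pi.zero_apply, map_zero]
  obtain ⟨s, w₀, hw₀⟩ := hacyc z₀ hdz₀ hz₀_empty
  exact exists_koszulD_eq_of_pow_smul hf hz he hz₀ hi hj hw₀

end Column

section DoubleComplex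

variable {k V ι Γ : Type*} [Field k] [AddCommGroup Γ]

/-- The Čech–Koszul cochains whose component at `ρ` and `T` has all its exponents in `P ρ T`. -/
def laurentCochains (k : Type*) [Field k] (P : Finset V → Finset ι → (V → ℤ) → Prop) :
    AddSubgroup (Finset V → Finset ι → MvLaurent k V) :=
  AddSubgroup.pi Set.univ fun ρ => laurentChains k (P ρ)

variable {P Q : Finset V → Finset ι → (V → ℤ) → Prop} {c : Finset V → Finset ι → MvLaurent k V}

theorem mem_laurentCochains : c ∈ laurentCochains k P ↔ ∀ ρ, c ρ ∈ laurentChains k (P ρ) := by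
  simp only [laurentCochains, AddSubgroup.mem_pi, Set.mem_univ, forall_const]

theorem laurentCochains_mono (h : ∀ ρ T a, P ρ T a → Q ρ T a) :
    laurentCochains k P ≤ laurentCochains k Q := fun _ hc =>
  mem_laurentCochains.2 fun ρ => laurentChains_mono (h ρ) (mem_laurentCochains.1 hc ρ)

theorem laurentCochains_eq_bot (h : ∀ ρ T a, ¬P ρ T a) : laurentCochains k P = ⊥ := by
  refine (AddSubgroup.eq_bot_iff_forall _).2 fun c hc => funext fun ρ => AddSubgroup.mem_bot.1 ?_
  rw [← laurentChains_eq_bot (k := k) (h ρ)]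
  exact mem_laurentCochains.1 hc ρ

theorem wedgeSum_mem_laurentCochains [LinearOrder V] {A : Finset V} (hc : c ∈ laurentCochains k P)
    (h : ∀ v ∈ A, ∀ ρ, v ∉ ρ → ∀ T a, P ρ T a → Q (insert v ρ) T a) :
    wedgeSum ℤ A c ∈ laurentCochains k Q :=
  mem_laurentCochains.2 <| wedgeSum_apply_mem A (fun ρ => laurentChains k (Q ρ)) fun v hv ρ hvρ =>
    laurentChains_mono (h v hv ρ hvρ) (mem_laurentCochains.1 hc ρ)

theorem contract_mem_laurentCochains [LinearOrder V] {v : V} (hc : c ∈ laurentCochains k P)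
    (h : ∀ ρ, v ∉ ρ → ∀ T a, P (insert v ρ) T a → Q ρ T a) :
    contract ℤ v c ∈ laurentCochains k Q :=
  mem_laurentCochains.2 <| contract_apply_mem (fun ρ => laurentChains k (Q ρ)) fun ρ hvρ =>
    laurentChains_mono (h ρ hvρ) (mem_laurentCochains.1 hc (insert v ρ))

theorem wedgeSum_koszulD_comp [LinearOrder V] [LinearOrder ι] [Fintype ι]
    (f : ι → MvPolynomial V k) (A : Finset V) (c : Finset V → Finset ι → MvLaurent k V) :
    wedgeSum ℤ A (koszulD f ∘ c) = koszulD f ∘ wedgeSum ℤ A c :=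
  wedgeSum_comp A (koszulD f).toAddMonoidHom c

variable [Fintype V]

/-- The exponents in Čech position `ρ` and Koszul position `T` of the degree `μ` strand of the
Čech–Koszul double complex in Čech degree `r` and Koszul degree `q`. In place of the Čech complex of
all variables we take its subcomplex on the `ρ` that meet both `A` and `B`: a product of a variable
in `A` and a variable in `B` is invertible there. -/
def IsCechKoszulExponent (A B : Finset V) (w : V → Γ) (δ : ι → Γ) (μ : Γ) (r q : ℕ) (ρ : Finset V)
    (T : Finset ι) (a : V → ℤ) : Prop :=
  ρ.card = r ∧ ¬Disjoint ρ A ∧ ¬Disjoint ρ B ∧ IsKoszulExponent w δ μ ρ q T a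

variable {A B : Finset V} {w : V → Γ} {δ : ι → Γ} {μ : Γ} {r q : ℕ}

theorem IsCechKoszulExponent.insert [DecidableEq V] {ρ : Finset V} {T : Finset ι} {a : V → ℤ}
    {v : V} (hv : v ∉ ρ) (h : IsCechKoszulExponent A B w δ μ r q ρ T a) :
    IsCechKoszulExponent A B w δ μ (r + 1) q (insert v ρ) T a := by
  obtain ⟨hr, hA, hB, hT, hdeg, hneg⟩ := h
  exact ⟨by rw [Finset.card_insert_of_notMem hv, hr],
    mt (Finset.disjoint_of_subset_left (Finset.subset_insert v ρ)) hA,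
    mt (Finset.disjoint_of_subset_left (Finset.subset_insert v ρ)) hB, hT, hdeg,
    fun u hu => Finset.mem_insert_of_mem (hneg u hu)⟩

variable (k A B w δ μ) in
/-- The term in Čech degree `r` and Koszul degree `q` of the degree `μ` strand of the Čech–Koszul
double complex. -/
abbrev cechKoszul (r q : ℕ) : AddSubgroup (Finset V → Finset ι → MvLaurent k V) :=
  laurentCochains k (IsCechKoszulExponent A B w δ μ r q)

theorem wedgeSum_univ_mem_cechKoszul [LinearOrder V] (hc : c ∈ cechKoszul k A B w δ μ r q) :
    wedgeSum ℤ Finset.univ c ∈ cechKoszul k A B w δ μ (r + 1) q :=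
  wedgeSum_mem_laurentCochains hc fun _ _ _ hv _ _ h => h.insert hv

variable [LinearOrder ι] [Fintype ι] {f : ι → MvPolynomial V k}

theorem koszulD_comp_mem_cechKoszul (hf : ∀ i, (f i).IsWeightedHomogeneous w (δ i))
    (hc : c ∈ cechKoszul k A B w δ μ r (q + 1)) : koszulD f ∘ c ∈ cechKoszul k A B w δ μ r q :=
  mem_laurentCochains.2 fun ρ => koszulD_mem_laurentChains (mem_laurentCochains.1 hc ρ)
    fun _ _ hb _ hi _ ⟨hr, hA, hB, h⟩ => ⟨hr, hA, hB, h.exponent_add hf hb hi⟩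

theorem exists_cechKoszul_koszulD_comp_eq (hc : c ∈ cechKoszul k A B w δ μ r q)
    (h : ∀ ρ, ∀ i ∈ ρ, ∀ j ∈ ρ, i ∈ A → j ∈ B →
      ∃ u ∈ laurentChains k (IsKoszulExponent w δ μ ρ (q + 1)), koszulD f u = c ρ) :
    ∃ c' ∈ cechKoszul k A B w δ μ r (q + 1), koszulD f ∘ c' = c := by
  have hcol (ρ : Finset V) : ∃ u ∈ laurentChains k
      (IsCechKoszulExponent A B w δ μ r (q + 1) ρ), koszulD f u = c ρ := by
    have hcρ := mem_laurentCochains.1 hc ρ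
    by_cases hρ : ρ.card = r ∧ ¬Disjoint ρ A ∧ ¬Disjoint ρ B
    · obtain ⟨hr, hA, hB⟩ := hρ
      obtain ⟨i, hi, hiA⟩ := Finset.not_disjoint_iff.1 hA
      obtain ⟨j, hj, hjB⟩ := Finset.not_disjoint_iff.1 hB
      obtain ⟨u, hu, hdu⟩ := h ρ i hi j hj hiA hjB
      exact ⟨u, laurentChains_mono (fun T a ha => ⟨hr, hA, hB, ha⟩) hu, hdu⟩
    · rw [laurentChains_eq_bot fun T a ha => hρ ⟨ha.1, ha.2.1, ha.2.2.1⟩,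
        AddSubgroup.mem_bot] at hcρ
      exact ⟨0, zero_mem _, by rw [map_zero, hcρ]⟩
  choose c' hc' hdc' using hcol
  exact ⟨c', mem_laurentCochains.2 hc', funext hdc'⟩

theorem exists_cechKoszul_koszulD_comp_eq_of_koszulAcyclicAway
    (hf : ∀ i, (f i).IsWeightedHomogeneous w (δ i))
    (hacyc : ∀ i ∈ A, ∀ j ∈ B, KoszulAcyclicAway f (X i * X j))
    (hc : c ∈ cechKoszul k A B w δ μ r (q + 1)) (hdc : koszulD f ∘ c = 0) :
    ∃ c' ∈ cechKoszul k A B w δ μ r (q + 2), koszulD f ∘ c' = c :=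
  exists_cechKoszul_koszulD_comp_eq hc fun ρ i hi j hj hiA hjB =>
    exists_koszulD_eq_of_koszulAcyclicAway hf (hacyc i hiA j hjB) hi hj
      (laurentChains_mono (fun _ _ h => h.2.2.2) (mem_laurentCochains.1 hc ρ)) (congr_fun hdc ρ)

end DoubleComplex

section Rows

variable {k V ι Γ : Type*} [Field k] [AddCommGroup Γ] [Fintype V]

theorem exists_notMem_forall_meets [DecidableEq V] {A B N : Finset V} (hAB : IsCompl A B)
    (hA : A.Nonempty) (hB : B.Nonempty) (hN : N.Nonempty) (hNu : N ≠ Finset.univ) :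
    ∃ i ∉ N, ∀ ρ, N ⊆ ρ → ¬Disjoint (insert i ρ) A → ¬Disjoint (insert i ρ) B →
      (¬Disjoint ρ A ∧ ¬Disjoint ρ B) ∨ (ρ = A ∧ N = A) ∨ (ρ = B ∧ N = B) := by
  by_cases hNAB : ¬Disjoint N A ∧ ¬Disjoint N B
  · obtain ⟨i, hi⟩ := not_forall.1 (mt Finset.eq_univ_iff_forall.2 hNu)
    exact ⟨i, hi, fun ρ hρ _ _ => .inl ⟨mt (Finset.disjoint_of_subset_left hρ) hNAB.1,
      mt (Finset.disjoint_of_subset_left hρ) hNAB.2⟩⟩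
  wlog hNB : Disjoint N B generalizing A B
  · have hNA : Disjoint N A := not_not.1 fun h => hNAB ⟨h, hNB⟩
    obtain ⟨i, hi, h⟩ := this hAB.symm hB hA (fun h => h.2 hNA) hNA
    exact ⟨i, hi, fun ρ hρ h₁ h₂ => (h ρ hρ h₂ h₁).imp And.symm Or.symm⟩
  have hNA : N ⊆ A := hAB.symm.disjoint_left_iff.1 hNB
  have hmeet {ρ : Finset V} (hρ : N ⊆ ρ) : ¬Disjoint ρ A := fun h => by
    obtain ⟨v, hv⟩ := hN
    exact Finset.disjoint_left.1 h (hρ hv) (hNA hv)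
  by_cases hAN : A ⊆ N
  · obtain ⟨i, hi⟩ := hB
    refine ⟨i, fun h => Finset.disjoint_left.1 hNB h hi, fun ρ hρ _ _ => ?_⟩
    by_cases hρB : Disjoint ρ B
    · have hρA : ρ ⊆ A := hAB.symm.disjoint_left_iff.1 hρB
      exact .inr (.inl ⟨hρA.antisymm (hAN.trans hρ), hNA.antisymm hAN⟩)
    · exact .inl ⟨hmeet hρ, hρB⟩
  · obtain ⟨i, hiA, hiN⟩ := Finset.not_subset.1 hAN
    refine ⟨i, hiN, fun ρ hρ _ h => .inl ⟨hmeet hρ, ?_⟩⟩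
    rwa [Finset.disjoint_insert_left, and_iff_right (Finset.disjoint_left.1 hAB.disjoint hiA)] at h

end Rows

section Cochains

variable {k V ι Γ : Type*} [Field k] [AddCommGroup Γ]
variable {P Q : Finset V → Finset ι → (V → ℤ) → Prop} {c : Finset V → Finset ι → MvLaurent k V}

theorem eq_zero_of_mem_laurentCochains (hP : c ∈ laurentCochains k P)
    (hQ : c ∈ laurentCochains k Q) (h : ∀ ρ T a, P ρ T a → ¬Q ρ T a) : c = 0 := by
  funext ρ T
  ext a
  by_contra ha
  exact h ρ T a (mem_laurentChains.1 (mem_laurentCochains.1 hP ρ) T a ha)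
    (mem_laurentChains.1 (mem_laurentCochains.1 hQ ρ) T a ha)

theorem exists_add_eq_of_mem_laurentCochains (R : Finset V → Prop)
    (hc : c ∈ laurentCochains k P) :
    ∃ u ∈ laurentCochains k fun ρ T a => P ρ T a ∧ R ρ,
      ∃ v ∈ laurentCochains k fun ρ T a => P ρ T a ∧ ¬R ρ, u + v = c := by
  classical
  have hmem (S : Finset V → Prop) [DecidablePred S] :
      (fun ρ => if S ρ then c ρ else 0) ∈ laurentCochains k fun ρ T a => P ρ T a ∧ S ρ := by
    refine mem_laurentCochains.2 fun ρ => ?_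
    by_cases hρ : S ρ
    · rw [if_pos hρ]
      exact laurentChains_mono (fun T a h => ⟨h, hρ⟩) (mem_laurentCochains.1 hc ρ)
    · rw [if_neg hρ]
      exact zero_mem _
  refine ⟨_, hmem R, _, hmem (¬R ·), funext fun ρ => ?_⟩
  by_cases hρ : R ρ <;> simp [hρ]

end Cochains

section Rows

variable {k V ι Γ : Type*} [Field k] [AddCommGroup Γ] [Fintype V]

/-- No Laurent monomial whose negative exponents are exactly those at the variables in `A` occurs
in Koszul degree `#A` of the degree `μ` strand. As these monomials span the top local cohomology
supported at the ideal generated by the variables in `A`, this says that `μ` is not in the support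
of `H^{#A}(K_{#A})`. -/
def AvoidsLocalCohomology (w : V → Γ) (δ : ι → Γ) (μ : Γ) (A : Finset V) : Prop :=
  ∀ (T : Finset ι) (a : V → ℤ), T.card = A.card → (∀ v, a v < 0 ↔ v ∈ A) →
    laurentDegree w a ≠ μ - ∑ i ∈ T, δ i

/-- The set of variables in which a Laurent monomial has negative exponent. -/
def negSet (a : V → ℤ) : Finset V := {v | a v < 0}

theorem mem_negSet {a : V → ℤ} {v : V} : v ∈ negSet a ↔ a v < 0 := by
  simp only [negSet, Finset.mem_filter, Finset.mem_univ, true_and]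

variable [LinearOrder V] {A B : Finset V} {w : V → Γ} {δ : ι → Γ} {μ : Γ} {p q : ℕ}
  {z : Finset V → Finset ι → MvLaurent k V}

theorem wedgeSum_univ_of_isCompl (hAB : IsCompl A B) (z : Finset V → Finset ι → MvLaurent k V) :
    wedgeSum ℤ Finset.univ z = wedgeSum ℤ A z + wedgeSum ℤ B z := by
  have huniv : Finset.univ = A ∪ B := hAB.sup_eq_top.symm
  rw [wedgeSum, huniv, Finset.sum_union hAB.disjoint]
  rfl

theorem exists_wedgeSum_univ_eq_of_negSet [Fintype ι] (hAB : IsCompl A B) (hA : A.Nonempty)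
    (hB : B.Nonempty) (hcard : Fintype.card ι + 2 ≤ Fintype.card V)
    (hμA : AvoidsLocalCohomology w δ μ A) (hμB : AvoidsLocalCohomology w δ μ B)
    {N : Finset V} (hN : N.Nonempty)
    (hz : z ∈ laurentCochains k fun ρ T a =>
      negSet a = N ∧ IsCechKoszulExponent A B w δ μ (p + 2) (p + 1) ρ T a)
    (hdz : wedgeSum ℤ Finset.univ z = 0) :
    ∃ u ∈ cechKoszul k A B w δ μ (p + 1) (p + 1), wedgeSum ℤ Finset.univ u = z := by
  rcases eq_or_ne N Finset.univ with rfl | hNu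
  · suffices h : z = 0 from ⟨0, zero_mem _, by rw [map_zero, h]⟩
    rw [laurentCochains_eq_bot, AddSubgroup.mem_bot] at hz
    · exact hz
    rintro ρ T a ⟨hN, hρ, -, -, hT, -, hneg⟩
    have hρu : ρ = Finset.univ := Finset.eq_univ_iff_forall.2 fun v =>
      hneg v (mem_negSet.1 (hN ▸ Finset.mem_univ v))
    rw [hρu, Finset.card_univ] at hρ
    have := T.card_le_univ
    omega
  obtain ⟨i, hiN, hi⟩ := exists_notMem_forall_meets hAB hA hB hN hNu
  refine ⟨contract ℤ i z, contract_mem_laurentCochains hz ?_,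
    wedgeSum_contract_eq_self (Finset.mem_univ i) hdz⟩
  rintro ρ hiρ T a ⟨rfl, hρ, hρA, hρB, hT, hdeg, hneg⟩
  rw [Finset.card_insert_of_notMem hiρ] at hρ
  have hnegρ (v : V) (hv : a v < 0) : v ∈ ρ :=
    Finset.mem_of_mem_insert_of_ne (hneg v hv) fun h => hiN (h ▸ mem_negSet.2 hv)
  rcases hi ρ (fun v hv => hnegρ v (mem_negSet.1 hv)) hρA hρB with
    ⟨hA, hB⟩ | ⟨rfl, hNA⟩ | ⟨rfl, hNB⟩
  · exact ⟨by omega, hA, hB, hT, hdeg, hnegρ⟩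
  · exact absurd hdeg (hμA T a (by omega) fun v => by rw [← mem_negSet, hNA])
  · exact absurd hdeg (hμB T a (by omega) fun v => by rw [← mem_negSet, hNB])

/-- The Čech–Koszul cochains that have polynomial entries and live over the sets of `p` variables
outside `A`: applying the two partial Čech differentials, along `A` and along `B`, to them gives the
Čech cocycles with polynomial entries up to coboundaries. -/
def cornerCochains (k : Type*) [Field k] (A : Finset V) (w : V → Γ) (δ : ι → Γ) (μ : Γ) (p q : ℕ) :
    AddSubgroup (Finset V → Finset ι → MvLaurent k V) :=
  laurentCochains k fun ρ T a => ρ.card = p ∧ Disjoint ρ A ∧ IsKoszulExponent w δ μ ∅ q T a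

theorem exists_add_wedgeSum_wedgeSum_eq_of_nonneg (hAB : IsCompl A B) (hA : A.Nonempty)
    (hB : B.Nonempty)
    (hz : z ∈ laurentCochains k fun ρ T a =>
      negSet a = ∅ ∧ IsCechKoszulExponent A B w δ μ (p + 2) q ρ T a)
    (hdz : wedgeSum ℤ Finset.univ z = 0) :
    ∃ u ∈ cechKoszul k A B w δ μ (p + 1) q, ∃ v ∈ cornerCochains k A w δ μ p q,
      wedgeSum ℤ Finset.univ u + wedgeSum ℤ A (wedgeSum ℤ B v) = z := by
  obtain ⟨i, hi⟩ := hA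
  obtain ⟨j, hj⟩ := hB
  have hy : contract ℤ i z ∈ laurentCochains k fun ρ T a =>
      ρ.card = p + 1 ∧ ¬Disjoint ρ B ∧ IsKoszulExponent w δ μ ∅ q T a := by
    refine contract_mem_laurentCochains hz ?_
    rintro ρ hiρ T a ⟨hN, hρ, -, hρB, hT, hdeg, -⟩
    rw [Finset.card_insert_of_notMem hiρ] at hρ
    rw [Finset.disjoint_insert_left, and_iff_right (Finset.disjoint_left.1 hAB.disjoint hi)] at hρB
    exact ⟨by omega, hρB, hT, hdeg, fun v hv => hN ▸ mem_negSet.2 hv⟩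
  have hdy := wedgeSum_contract_eq_self (Finset.mem_univ i) hdz
  obtain ⟨u, hu, y, hy, huy⟩ := exists_add_eq_of_mem_laurentCochains (¬Disjoint · A) hy
  rw [← huy, map_add, wedgeSum_univ_of_isCompl hAB y] at hdy
  have hu' : u ∈ cechKoszul k A B w δ μ (p + 1) q := laurentCochains_mono
    (fun ρ T a ⟨⟨hρ, hρB, hT, hdeg, hneg⟩, hρA⟩ =>
      ⟨hρ, hρA, hρB, hT, hdeg, fun v hv => absurd (hneg v hv) (Finset.notMem_empty v)⟩) hu
  have hBy : wedgeSum ℤ B y = 0 := by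
    refine eq_zero_of_mem_laurentCochains (P := fun ρ _ _ => Disjoint ρ A)
      (Q := fun ρ _ _ => ¬Disjoint ρ A) (wedgeSum_mem_laurentCochains hy ?_) ?_
      fun _ _ _ h h' => h' h
    · intro v hv ρ _ T a h
      exact Finset.disjoint_insert_left.2
        ⟨Finset.disjoint_right.1 hAB.disjoint hv, not_not.1 h.2⟩
    · rw [← add_assoc] at hdy
      rw [eq_sub_of_add_eq' hdy]
      refine sub_mem (laurentCochains_mono (fun ρ T a h => h.2.2.1) hz) (add_mem
        (laurentCochains_mono (fun ρ T a h => h.2.1) (wedgeSum_univ_mem_cechKoszul hu'))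
        (wedgeSum_mem_laurentCochains hy fun v hv ρ _ T a _ h =>
          Finset.disjoint_left.1 h (Finset.mem_insert_self v ρ) hv))
  refine ⟨u, hu', contract ℤ j y, contract_mem_laurentCochains hy ?_, ?_⟩
  · rintro ρ hjρ T a ⟨⟨hρ, -, h⟩, hρA⟩
    rw [Finset.card_insert_of_notMem hjρ] at hρ
    exact ⟨by omega, Finset.disjoint_of_subset_left (Finset.subset_insert j ρ) (not_not.1 hρA), h⟩
  · rw [wedgeSum_contract_eq_self hj hBy, ← hdy, hBy, add_zero]

theorem exists_add_wedgeSum_wedgeSum_eq [Fintype ι] (hAB : IsCompl A B) (hA : A.Nonempty)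
    (hB : B.Nonempty) (hcard : Fintype.card ι + 2 ≤ Fintype.card V)
    (hμA : AvoidsLocalCohomology w δ μ A) (hμB : AvoidsLocalCohomology w δ μ B)
    (hz : z ∈ cechKoszul k A B w δ μ (p + 2) (p + 1)) (hdz : wedgeSum ℤ Finset.univ z = 0) :
    ∃ u ∈ cechKoszul k A B w δ μ (p + 1) (p + 1), ∃ v ∈ cornerCochains k A w δ μ p (p + 1),
      wedgeSum ℤ Finset.univ u + wedgeSum ℤ A (wedgeSum ℤ B v) = z := by
  let zN (N : Finset V) : Finset V → Finset ι → MvLaurent k V :=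
    chainRestrict (fun _ a => negSet a = N) ∘ z
  have hzN (N : Finset V) : zN N ∈ laurentCochains k fun ρ T a =>
      negSet a = N ∧ IsCechKoszulExponent A B w δ μ (p + 2) (p + 1) ρ T a :=
    mem_laurentCochains.2 fun ρ => chainRestrict_mem (mem_laurentCochains.1 hz ρ)
  have hdzN (N : Finset V) : wedgeSum ℤ Finset.univ (zN N) = 0 := by
    rw [wedgeSum_comp, hdz]
    exact funext fun _ => map_zero _
  have hsum : ∑ N, zN N = z := by
    funext ρ
    rw [Finset.sum_apply]
    exact sum_chainRestrict_fiber negSet (z ρ)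
  have hN (N : Finset V) : ∃ u ∈ cechKoszul k A B w δ μ (p + 1) (p + 1),
      ∃ v ∈ cornerCochains k A w δ μ p (p + 1),
        wedgeSum ℤ Finset.univ u + wedgeSum ℤ A (wedgeSum ℤ B v) = zN N := by
    rcases N.eq_empty_or_nonempty with rfl | hN
    · exact exists_add_wedgeSum_wedgeSum_eq_of_nonneg hAB hA hB (hzN ∅) (hdzN ∅)
    · obtain ⟨u, hu, hdu⟩ := exists_wedgeSum_univ_eq_of_negSet hAB hA hB hcard hμA hμB hN
        (hzN N) (hdzN N)
      exact ⟨u, hu, 0, zero_mem _, by rw [map_zero, map_zero, add_zero, hdu]⟩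
  choose u hu v hv huv using hN
  refine ⟨∑ N, u N, sum_mem fun N _ => hu N, ∑ N, v N, sum_mem fun N _ => hv N, ?_⟩
  simp only [map_sum]
  rw [← Finset.sum_add_distrib, ← hsum]
  exact Finset.sum_congr rfl fun N _ => huv N

theorem exists_wedgeSum_univ_eq [Fintype ι] (hAB : IsCompl A B) (hA : A.Nonempty)
    (hB : B.Nonempty) (hcard : Fintype.card ι + 2 ≤ Fintype.card V)
    (hμA : AvoidsLocalCohomology w δ μ A) (hμB : AvoidsLocalCohomology w δ μ B)
    (hz : z ∈ cechKoszul k A B w δ μ (p + 3) (p + 2)) (hdz : wedgeSum ℤ Finset.univ z = 0) :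
    ∃ u ∈ cechKoszul k A B w δ μ (p + 2) (p + 2), wedgeSum ℤ Finset.univ u = z := by
  obtain ⟨u, hu, v, hv, huv⟩ := exists_add_wedgeSum_wedgeSum_eq hAB hA hB hcard hμA hμB hz hdz
  refine ⟨u - wedgeSum ℤ A v, sub_mem hu (wedgeSum_mem_laurentCochains hv ?_), ?_⟩
  · rintro i hiA ρ hiρ T a ⟨hρ, hρA, hT, hdeg, hneg⟩
    obtain ⟨j, hj⟩ := Finset.card_pos.1 (by omega : 0 < ρ.card)
    have hjB : j ∈ B := hAB.disjoint_left_iff.1 hρA hj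
    exact ⟨by rw [Finset.card_insert_of_notMem hiρ, hρ],
      Finset.not_disjoint_iff.2 ⟨i, Finset.mem_insert_self i ρ, hiA⟩,
      Finset.not_disjoint_iff.2 ⟨j, Finset.mem_insert_of_mem hj, hjB⟩, hT, hdeg,
      fun v hv => absurd (hneg v hv) (Finset.notMem_empty v)⟩
  · rw [map_sub, wedgeSum_univ_of_isCompl hAB (wedgeSum ℤ A v), wedgeSum_wedgeSum_self, zero_add,
      sub_eq_add_neg, ← wedgeSum_wedgeSum_comm, huv]

end Rows

section Corner

variable {k V ι Γ : Type*} [Field k] [AddCommGroup Γ] [Fintype V]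
  {A B : Finset V} {w : V → Γ} {δ : ι → Γ} {μ : Γ} {p q : ℕ}
  {c : Finset V → Finset ι → MvLaurent k V}

theorem koszulD_comp_mem_cornerCochains [LinearOrder ι] [Fintype ι] {f : ι → MvPolynomial V k}
    (hf : ∀ i, (f i).IsWeightedHomogeneous w (δ i))
    (hc : c ∈ cornerCochains k A w δ μ p (q + 1)) :
    koszulD f ∘ c ∈ cornerCochains k A w δ μ p q :=
  mem_laurentCochains.2 fun ρ => koszulD_mem_laurentChains (mem_laurentCochains.1 hc ρ)
    fun _ _ hb _ hi _ ⟨hρ, hρA, h⟩ => ⟨hρ, hρA, h.exponent_add hf hb hi⟩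

variable [LinearOrder V]

theorem single_mem_cornerCochains {z : Finset ι → MvLaurent k V}
    (hz : z ∈ laurentChains k (IsKoszulExponent w δ μ ∅ q)) :
    (Pi.single ∅ z : Finset V → Finset ι → MvLaurent k V) ∈ cornerCochains k A w δ μ 0 q := by
  refine mem_laurentCochains.2 fun ρ => ?_
  rcases eq_or_ne ρ ∅ with rfl | hρ
  · rw [Pi.single_eq_same]
    exact laurentChains_mono (fun T a h => ⟨Finset.card_empty, Finset.disjoint_empty_left A, h⟩) hz
  · rw [Pi.single_eq_of_ne hρ]
    exact zero_mem _

theorem wedgeSum_wedgeSum_mem_cechKoszul (hc : c ∈ cornerCochains k A w δ μ p q) :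
    wedgeSum ℤ A (wedgeSum ℤ B c) ∈ cechKoszul k A B w δ μ (p + 2) q := by
  refine wedgeSum_mem_laurentCochains (P := fun ρ T a =>
    ρ.card = p + 1 ∧ ¬Disjoint ρ B ∧ IsKoszulExponent w δ μ ∅ q T a)
    (wedgeSum_mem_laurentCochains hc ?_) ?_
  · rintro j hj ρ hjρ T a ⟨hρ, -, h⟩
    exact ⟨by rw [Finset.card_insert_of_notMem hjρ, hρ],
      Finset.not_disjoint_iff.2 ⟨j, Finset.mem_insert_self j ρ, hj⟩, h⟩
  · rintro i hi ρ hiρ T a ⟨hρ, hρB, hT, hdeg, hneg⟩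
    exact ⟨by rw [Finset.card_insert_of_notMem hiρ, hρ],
      Finset.not_disjoint_iff.2 ⟨i, Finset.mem_insert_self i ρ, hi⟩,
      mt (Finset.disjoint_of_subset_left (Finset.subset_insert i ρ)) hρB, hT, hdeg,
      fun v hv => absurd (hneg v hv) (Finset.notMem_empty v)⟩

theorem eq_zero_of_wedgeSum_wedgeSum_eq_zero_of_mem_cornerCochains (hAB : IsCompl A B)
    (hA : A.Nonempty) (hB : B.Nonempty) (hc : c ∈ cornerCochains k A w δ μ 0 q)
    (h : wedgeSum ℤ A (wedgeSum ℤ B c) = 0) : c = 0 := by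
  have hcontract (v : V) : contract ℤ v c = 0 := by
    rw [← AddSubgroup.mem_bot, ← laurentCochains_eq_bot (k := k) (P := fun _ _ _ => False)
      fun _ _ _ => id]
    refine contract_mem_laurentCochains hc fun ρ _ T a hρ => ?_
    exact Finset.insert_ne_empty v ρ (Finset.card_eq_zero.1 hρ.1)
  obtain ⟨i, hi⟩ := hA
  obtain ⟨j, hj⟩ := hB
  exact eq_zero_of_wedgeSum_wedgeSum_eq_zero hi (Finset.disjoint_left.1 hAB.disjoint hi) hj h
    (hcontract i) (hcontract j)

end Corner

section Chase

variable {k V ι Γ : Type*} [Field k] [AddCommGroup Γ] [Fintype V] [LinearOrder V] [Fintype ι]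
  [LinearOrder ι] {A B : Finset V} {w : V → Γ} {δ : ι → Γ} {μ : Γ} {f : ι → MvPolynomial V k}
  {c : Finset V → Finset ι → MvLaurent k V}

theorem exists_wedgeSum_univ_sub_eq_zero (hAB : IsCompl A B) (hA : A.Nonempty) (hB : B.Nonempty)
    (hcard : Fintype.card ι + 2 ≤ Fintype.card V)
    (hf : ∀ i, (f i).IsWeightedHomogeneous w (δ i))
    (hacyc : ∀ i ∈ A, ∀ j ∈ B, KoszulAcyclicAway f (X i * X j))
    (hμA : AvoidsLocalCohomology w δ μ A) (hμB : AvoidsLocalCohomology w δ μ B) {r : ℕ}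
    (hc : c ∈ cechKoszul k A B w δ μ (r + 2) (r + 1))
    (hdc : koszulD f ∘ wedgeSum ℤ Finset.univ c = 0) :
    ∃ u ∈ cechKoszul k A B w δ μ (r + 2) (r + 2),
      wedgeSum ℤ Finset.univ (c - koszulD f ∘ u) = 0 := by
  obtain ⟨n, hn⟩ : ∃ n, Fintype.card V < r + 3 + n := ⟨Fintype.card V, by omega⟩
  have hdc_mem := wedgeSum_univ_mem_cechKoszul hc
  induction n generalizing r c with
  | zero =>
    refine ⟨0, zero_mem _, ?_⟩
    have hD : koszulD f ∘ (0 : Finset V → Finset ι → MvLaurent k V) = 0 :=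
      funext fun _ => map_zero _
    rw [hD, sub_zero]
    rwa [cechKoszul, laurentCochains_eq_bot fun ρ T a h => ?_, AddSubgroup.mem_bot] at hdc_mem
    have := ρ.card_le_univ.trans_lt hn
    exact absurd h.1 this.ne
  | succ n ih =>
    obtain ⟨c', hc', hdc'⟩ :=
      exists_cechKoszul_koszulD_comp_eq_of_koszulAcyclicAway hf hacyc hdc_mem hdc
    obtain ⟨u', hu', hdu'⟩ := ih hc' (by
      rw [← wedgeSum_koszulD_comp, hdc', wedgeSum_wedgeSum_self]) (by omega)
      (wedgeSum_univ_mem_cechKoszul hc')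
    obtain ⟨u, hu, hdu⟩ := exists_wedgeSum_univ_eq hAB hA hB hcard hμA hμB
      (sub_mem hc' (koszulD_comp_mem_cechKoszul hf hu')) hdu'
    refine ⟨u, hu, ?_⟩
    have hDu' : koszulD f ∘ koszulD f ∘ u' = 0 := funext fun ρ => koszulD_koszulD f (u' ρ)
    have hDsub : koszulD f ∘ (c' - koszulD f ∘ u') = koszulD f ∘ c' - koszulD f ∘ koszulD f ∘ u' :=
      funext fun ρ => map_sub (koszulD f) _ _
    rw [map_sub, wedgeSum_koszulD_comp, hdu, hDsub, hDu', sub_zero, hdc', sub_self]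

theorem exists_mem_cornerCochains_koszulD_comp_eq (hAB : IsCompl A B) (hA : A.Nonempty)
    (hB : B.Nonempty) (hcard : Fintype.card ι + 2 ≤ Fintype.card V)
    (hf : ∀ i, (f i).IsWeightedHomogeneous w (δ i))
    (hacyc : ∀ i ∈ A, ∀ j ∈ B, KoszulAcyclicAway f (X i * X j))
    (hμA : AvoidsLocalCohomology w δ μ A) (hμB : AvoidsLocalCohomology w δ μ B)
    (hc : c ∈ cechKoszul k A B w δ μ 2 1) (hdc : koszulD f ∘ wedgeSum ℤ Finset.univ c = 0) :
    ∃ v ∈ cornerCochains k A w δ μ 0 1,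
      koszulD f ∘ wedgeSum ℤ A (wedgeSum ℤ B v) = koszulD f ∘ c := by
  obtain ⟨u, hu, hdu⟩ :=
    exists_wedgeSum_univ_sub_eq_zero hAB hA hB hcard hf hacyc hμA hμB hc hdc
  obtain ⟨x, hx, v, hv, hxv⟩ := exists_add_wedgeSum_wedgeSum_eq hAB hA hB hcard hμA hμB
    (sub_mem hc (koszulD_comp_mem_cechKoszul hf hu)) hdu
  have hx0 : x = 0 := by
    rwa [cechKoszul, laurentCochains_eq_bot, AddSubgroup.mem_bot] at hx
    rintro ρ T a ⟨hρ, hρA, hρB, -⟩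
    obtain ⟨v, rfl⟩ := Finset.card_eq_one.1 hρ
    rw [Finset.disjoint_singleton_left, not_not] at hρA hρB
    exact Finset.disjoint_left.1 hAB.disjoint hρA hρB
  refine ⟨v, hv, funext fun ρ => ?_⟩
  rw [hx0, map_zero, zero_add] at hxv
  rw [hxv, Function.comp_apply, Pi.sub_apply, map_sub, Function.comp_apply, koszulD_koszulD,
    sub_zero, Function.comp_apply]

theorem exists_mem_cechKoszul_koszulD_comp_eq_single (hf : ∀ i, (f i).IsWeightedHomogeneous w (δ i))
    {g : MvPolynomial V k} (hg : g.IsWeightedHomogeneous w μ)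
    (hsat : ∀ i ∈ A, ∀ j ∈ B, ∃ t : ℕ, (X i * X j) ^ t * g ∈ Ideal.span (Set.range f)) :
    ∃ c ∈ cechKoszul k A B w δ μ 2 1, koszulD f ∘ c =
      wedgeSum ℤ A (wedgeSum ℤ B (Pi.single ∅ (Pi.single ∅ (algebraMap _ _ g)))) := by
  set G : Finset ι → MvLaurent k V := Pi.single ∅ (algebraMap _ _ g)
  have hG (ρ : Finset V) : G ∈ laurentChains k (IsKoszulExponent w δ μ ρ 0) :=
    single_algebraMap_mem_laurentChains hg ρ
  have hmem : wedgeSum ℤ A (wedgeSum ℤ B (Pi.single ∅ G)) ∈ cechKoszul k A B w δ μ 2 0 :=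
    wedgeSum_wedgeSum_mem_cechKoszul (single_mem_cornerCochains (hG ∅))
  refine exists_cechKoszul_koszulD_comp_eq hmem fun ρ i hi j hj hiA hjB => ?_
  obtain ⟨t, ht⟩ := hsat i hiA j hjB
  obtain ⟨w₀, hw₀⟩ := exists_koszulD_eq_single_empty ht
  obtain ⟨u, hu, hdu⟩ := exists_koszulD_eq_of_pow_smul hf (hG ρ) (e := 0) (fun _ _ => rfl)
    (z₀ := Pi.single ∅ g) (fun T => by
      rw [← AddMonoidAlgebra.one_def, one_mul]
      exact Pi.apply_single (fun _ => algebraMap (MvPolynomial V k) (MvLaurent k V))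
        (fun _ => map_zero _) ∅ g T)
    hi hj (s := t) (w₀ := w₀) (by rw [hw₀, ← Pi.single_smul, smul_eq_mul])
  obtain ⟨l, hl⟩ : wedgeSum ℤ A (wedgeSum ℤ B (Pi.single ∅ G)) ρ ∈ AddSubgroup.zmultiples G := by
    refine wedgeSum_apply_mem A (fun _ => AddSubgroup.zmultiples G) (fun _ _ ρ _ =>
      wedgeSum_apply_mem B (fun _ => AddSubgroup.zmultiples G) (fun _ _ ρ _ => ?_) ρ) ρ
    rcases eq_or_ne ρ ∅ with rfl | hρ
    · rw [Pi.single_eq_same]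
      exact AddSubgroup.mem_zmultiples G
    · rw [Pi.single_eq_of_ne hρ]
      exact zero_mem _
  exact ⟨l • u, zsmul_mem hu l, by rw [map_zsmul, hdu]; exact hl⟩

end Chase

theorem mem_span_range_of_avoidsLocalCohomology {k V ι Γ : Type*} [Field k] [AddCommGroup Γ]
    [Fintype V] [Fintype ι] [LinearOrder ι] {A B : Finset V} {w : V → Γ} {δ : ι → Γ} {μ : Γ}
    {f : ι → MvPolynomial V k} (hAB : IsCompl A B)
    (hA : A.Nonempty) (hB : B.Nonempty) (hcard : Fintype.card ι + 2 ≤ Fintype.card V)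
    (hf : ∀ i, (f i).IsWeightedHomogeneous w (δ i))
    (hacyc : ∀ i ∈ A, ∀ j ∈ B, KoszulAcyclicAway f (X i * X j))
    (hμA : AvoidsLocalCohomology w δ μ A) (hμB : AvoidsLocalCohomology w δ μ B)
    {g : MvPolynomial V k} (hg : g.IsWeightedHomogeneous w μ)
    (hsat : ∀ i ∈ A, ∀ j ∈ B, ∃ t : ℕ, (X i * X j) ^ t * g ∈ Ideal.span (Set.range f)) :
    g ∈ Ideal.span (Set.range f) := by
  let _ : LinearOrder V := IsWellOrder.linearOrder WellOrderingRel
  set G : Finset V → Finset ι → MvLaurent k V := Pi.single ∅ (Pi.single ∅ (algebraMap _ _ g))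
    with hG_def
  have hG : G ∈ cornerCochains k A w δ μ 0 0 :=
    single_mem_cornerCochains (single_algebraMap_mem_laurentChains hg ∅)
  obtain ⟨c, hc, hdc⟩ := exists_mem_cechKoszul_koszulD_comp_eq_single hf hg hsat
  have hDdc : koszulD f ∘ wedgeSum ℤ Finset.univ c = 0 := by
    rw [← wedgeSum_koszulD_comp, hdc, wedgeSum_univ_of_isCompl hAB, wedgeSum_wedgeSum_self,
      zero_add, wedgeSum_wedgeSum_comm A B, map_neg, wedgeSum_wedgeSum_self, neg_zero]
  obtain ⟨v, hv, hdv⟩ :=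
    exists_mem_cornerCochains_koszulD_comp_eq hAB hA hB hcard hf hacyc hμA hμB hc hDdc
  have hDv : koszulD f ∘ v = G := sub_eq_zero.1 <|
    eq_zero_of_wedgeSum_wedgeSum_eq_zero_of_mem_cornerCochains hAB hA hB
      (sub_mem (koszulD_comp_mem_cornerCochains hf hv) hG) <| by
        rw [map_sub, map_sub, wedgeSum_koszulD_comp, wedgeSum_koszulD_comp, hdv, hdc, sub_self]
  have hpoly (T : Finset ι) : ∃ p : MvPolynomial V k, algebraMap _ _ p = v ∅ T :=
    exists_algebraMap_eq_of_nonneg fun a ha i => not_lt.1 fun hi =>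
      Finset.notMem_empty i ((mem_laurentChains.1 (mem_laurentCochains.1 hv ∅) T a ha).2.2.2.2 i hi)
  choose p hp using hpoly
  have hDp : koszulD f p ∅ = g := algebraMap_mvLaurent_injective <| by
    rw [algebraMap_koszulD, funext hp, ← Function.comp_apply (f := koszulD f) (g := v), hDv,
      hG_def, Pi.single_eq_same, Pi.single_eq_same]
  exact hDp ▸ koszulD_apply_empty_mem_span f p

section Saturation

variable {k : Type} [Field k] {n m : ℕ} {I J C : Ideal (PolyS k n m)}

theorem le_satIdeal (I C : Ideal (PolyS k n m)) : I ≤ satIdeal I C :=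
  le_iSup_of_le 0 fun _ hx => Submodule.mem_colon.2 fun _ _ => I.mul_mem_right _ hx

theorem exists_pow_mul_mem_of_mem_satIdeal {p b : PolyS k n m} (hp : p ∈ satIdeal I C)
    (hb : b ∈ C) : ∃ t : ℕ, b ^ t * p ∈ I := by
  induction hp using Submodule.iSup_induction' with
  | mem t p hp => exact ⟨t, mul_comm p _ ▸ Submodule.mem_colon.1 hp _ (Set.pow_mem_pow hb)⟩
  | zero => exact ⟨0, by rw [mul_zero]; exact I.zero_mem⟩
  | add p q _ _ hp hq =>
    obtain ⟨t, ht⟩ := hp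
    obtain ⟨s, hs⟩ := hq
    refine ⟨t + s, ?_⟩
    have hsplit : b ^ (t + s) * (p + q) = b ^ s * (b ^ t * p) + b ^ t * (b ^ s * q) := by ring
    exact hsplit ▸ I.add_mem (I.mul_mem_left _ ht) (I.mul_mem_left _ hs)

theorem X_mul_X_mem_Birr (i : Fin (n + 1)) (j : Fin (m + 1)) :
    (X (Sum.inl i) * X (Sum.inr j) : PolyS k n m) ∈ Birr k n m :=
  Ideal.mul_mem_mul (Ideal.subset_span ⟨i, rfl⟩) (Ideal.subset_span ⟨j, rfl⟩)

theorem HFq_eq_of_le {μ : ℤ × ℤ} (hIJ : I ≤ J) (h : ∀ g ∈ J, g ∈ grad k n m μ → g ∈ I) :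
    HFq k n m I μ = HFq k n m J μ := by
  let φ : (PolyS k n m ⧸ I) →ₗ[k] (PolyS k n m ⧸ J) := (Ideal.Quotient.factorₐ k hIJ).toLinearMap
  have hmap : (quotPiece k n m I μ).map φ = quotPiece k n m J μ := by
    rw [quotPiece, ← Submodule.map_comp]
    rfl
  have hinj : Function.Injective (φ.domRestrict (quotPiece k n m I μ)) := by
    refine (injective_iff_map_eq_zero _).2 ?_
    rintro ⟨_, g, hg, rfl⟩ hφg
    exact Subtype.ext
      (Ideal.Quotient.eq_zero_iff_mem.2 (h g (Ideal.Quotient.eq_zero_iff_mem.1 hφg) hg))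
  rw [HFq, HFq, ← hmap, ← LinearMap.range_domRestrict, LinearMap.finrank_range_of_inj hinj]

end Saturation

section Bigraded

variable {k : Type} [Field k] {n m : ℕ} {ι : Type*}

/-- The set `Γ₁` for forms `f i` of arbitrary bidegrees `δ i`: as `K_q(f, S)` is the sum of the
`S(-∑ i ∈ T, δ i)` over the sets `T` of `q` indices, it is the union over these `T` of the
translates of the supports of `H^{n+1}_{B₁}(S)` (with `q = n + 1`) and of `H^{m+1}_{B₂}(S)`
(with `q = m + 1`). -/
def gammaOne (n m : ℕ) (δ : ι → ℤ × ℤ) : Set (ℤ × ℤ) :=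
  {γ | (∃ T : Finset ι, T.card = n + 1 ∧
          (γ - ∑ i ∈ T, δ i).1 ≤ -(n + 1 : ℤ) ∧ 0 ≤ (γ - ∑ i ∈ T, δ i).2) ∨
       (∃ T : Finset ι, T.card = m + 1 ∧
          0 ≤ (γ - ∑ i ∈ T, δ i).1 ∧ (γ - ∑ i ∈ T, δ i).2 ≤ -(m + 1 : ℤ))}

theorem gammaOne_const_subset_GammaSet (n m d e : ℕ) :
    gammaOne n m (fun _ : Fin (n + m) => ((d : ℤ), (e : ℤ))) ⊆ GammaSet n m d e 1 := by
  rintro γ (⟨T, hT, h₁, h₂⟩ | ⟨T, hT, h₁, h₂⟩)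
  all_goals
    have hle : T.card ≤ n + m := T.card_le_univ.trans_eq (Fintype.card_fin _)
    simp only [Finset.sum_const, hT, Prod.fst_sub, Prod.snd_sub, Prod.smul_mk, nsmul_eq_mul,
      Nat.cast_add, Nat.cast_one] at h₁ h₂
  · exact .inl ⟨by omega, by omega, by linarith, by linarith⟩
  · exact .inr ⟨by omega, by omega, by linarith, by linarith⟩

theorem laurentDegree_wt (a : Fin (n + 1) ⊕ Fin (m + 1) → ℤ) :
    laurentDegree (wt n m) a = (∑ i, a (.inl i), ∑ j, a (.inr j)) := by
  simp [laurentDegree, wt, Fintype.sum_sum_type, Prod.ext_iff, Prod.fst_sum, Prod.snd_sum]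

theorem sum_le_neg_card_of_neg {α : Type*} [Fintype α] {a : α → ℤ} (ha : ∀ i, a i < 0) :
    ∑ i, a i ≤ -(Fintype.card α : ℤ) := by
  simpa using Finset.sum_le_card_nsmul Finset.univ a (-1) fun i _ => by grind

variable {δ : ι → ℤ × ℤ} {μ : ℤ × ℤ}

theorem avoidsLocalCohomology_map_inl (hμ : μ ∉ gammaOne n m δ) :
    AvoidsLocalCohomology (wt n m) δ μ (Finset.univ.map .inl) := by
  refine fun T a hT ha hdeg => hμ (.inl ⟨T, by simpa using hT, ?_⟩)
  rw [← hdeg, laurentDegree_wt]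
  dsimp only
  exact ⟨by simpa using sum_le_neg_card_of_neg fun i => (ha (.inl i)).2 (by simp),
    Finset.sum_nonneg fun j _ => not_lt.1 (mt (ha (.inr j)).1 (by simp))⟩

theorem avoidsLocalCohomology_map_inr (hμ : μ ∉ gammaOne n m δ) :
    AvoidsLocalCohomology (wt n m) δ μ (Finset.univ.map .inr) := by
  refine fun T a hT ha hdeg => hμ (.inr ⟨T, by simpa using hT, ?_⟩)
  rw [← hdeg, laurentDegree_wt]
  dsimp only
  exact ⟨Finset.sum_nonneg fun i _ => not_lt.1 (mt (ha (.inl i)).1 (by simp)),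
    by simpa using sum_le_neg_card_of_neg fun j => (ha (.inr j)).2 (by simp)⟩

theorem isCompl_map_inl_map_inr (α β : Type*) [Fintype α] [Fintype β] :
    IsCompl (Finset.univ.map .inl : Finset (α ⊕ β)) (Finset.univ.map .inr) := by
  classical
  refine IsCompl.of_eq ?_ ?_
  · ext (i | j) <;> simp
  · ext (i | j) <;> simp

theorem linearIndependent_wt (i : Fin (n + 1)) (j : Fin (m + 1)) :
    LinearIndependent ℕ ![wt n m (.inl i), wt n m (.inr j)] := by
  refine Fintype.linearIndependent_iffₛ.2 fun a b hab => Fin.forall_fin_two.2 ?_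
  simpa [wt, Prod.ext_iff] using hab

theorem koszulAcyclicAway_X_mul_X [LinearOrder ι] [Fintype ι] (hcard : Fintype.card ι ≤ n + m)
    {f : ι → PolyS k n m} (hf : ∀ i, f i ∈ grad k n m (δ i))
    (hdim : ringKrullDim
      (PolyS k n m ⧸ satIdeal (Ideal.span (Set.range f)) (Birr k n m)) ≤ 2)
    (i : Fin (n + 1)) (j : Fin (m + 1)) :
    KoszulAcyclicAway f (X (Sum.inl i) * X (Sum.inr j)) := by
  refine koszulAcyclicAway_of_ringKrullDim_le hf ?_ hdim (linearIndependent_wt i j) ?_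
    fun p hp => exists_pow_mul_mem_of_mem_satIdeal hp (X_mul_X_mem_Birr i j)
  · simp only [Fintype.card_sum, Fintype.card_fin]
    omega
  · rintro (v | v)
    exacts [.inl rfl, .inr rfl]

theorem mem_of_mem_satIdeal_of_mem_grad [Fintype ι] (hcard : Fintype.card ι ≤ n + m)
    {f : ι → PolyS k n m} (hf : ∀ i, f i ∈ grad k n m (δ i))
    (hdim : ringKrullDim
      (PolyS k n m ⧸ satIdeal (Ideal.span (Set.range f)) (Birr k n m)) ≤ 2)
    (hμ : μ ∉ gammaOne n m δ) {g : PolyS k n m}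
    (hg : g ∈ satIdeal (Ideal.span (Set.range f)) (Birr k n m)) (hgμ : g ∈ grad k n m μ) :
    g ∈ Ideal.span (Set.range f) := by
  let _ : LinearOrder ι := IsWellOrder.linearOrder WellOrderingRel
  refine mem_span_range_of_avoidsLocalCohomology
    (isCompl_map_inl_map_inr (Fin (n + 1)) (Fin (m + 1))) (by simp) (by simp) ?_ hf ?_
    (avoidsLocalCohomology_map_inl hμ) (avoidsLocalCohomology_map_inr hμ) hgμ ?_
  · simp only [Fintype.card_sum, Fintype.card_fin]
    omega
  · simpa using koszulAcyclicAway_X_mul_X hcard hf hdim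
  · simpa using fun i j => exists_pow_mul_mem_of_mem_satIdeal hg (X_mul_X_mem_Birr i j)

end Bigraded

theorem stmt10_general {k : Type} [Field k] {n m : ℕ} {ι : Type*} [Fintype ι]
    (hcard : Fintype.card ι ≤ n + m) {f : ι → PolyS k n m} {δ : ι → ℤ × ℤ}
    (hf : ∀ i, f i ∈ grad k n m (δ i))
    (hdim : ringKrullDim
      (PolyS k n m ⧸ satIdeal (Ideal.span (Set.range f)) (Birr k n m)) ≤ 2)
    {μ : ℤ × ℤ} (hμ : μ ∉ gammaOne n m δ) :
    HFq k n m (Ideal.span (Set.range f)) μ = HFV k n m (Ideal.span (Set.range f)) μ :=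
  HFq_eq_of_le (le_satIdeal _ _) fun _ hg hgμ =>
    mem_of_mem_satIdeal_of_mem_grad hcard hf hdim hμ hg hgμ

theorem stmt10 (k : Type) [Field k] (n m d e : ℕ)
    (f : Fin (n + m) → PolyS k n m) (I : Ideal (PolyS k n m))
    (hCI : IsCIPoints k n m d e f I)
    (μ : ℤ × ℤ) (hμ : μ ∉ GammaSet n m d e 1) :
    HFq k n m I μ = HFV k n m I μ := by
  obtain ⟨hf, rfl, hdim⟩ := hCI
  exact stmt10_general (Fintype.card_fin _).le hf (by rw [hdim]; norm_num)
    fun h => hμ (gammaOne_const_subset_GammaSet n m d e h)
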